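/- Let d be a locally compact length metric on X, let h, ρ: I×X → (0,∞) be locally Lipschitz, and let F = {d_{ρ(s,·)} : s ∈ I} be the family of conformally weighted length metrics (so |β'_t|_{d_{ρ(s,·)}} = ρ(s,β_t)|β'_t|_d a.e. for absolutely continuous curves β). If γ: [a,b] → hI×_F X is a maximizing causal curve (i.e., τ(γ) = τ(γ_a,γ_b)) with τ(γ) > 0, then γ is timelike, i.e., h(γ_t)² α'(t)² − v_β(α_t,t)² > 0 for a.e. t ∈ [a,b]. -/

import Mathlib

open Filter MeasureTheory Set Topology
open scoped ENNReal NNReal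

noncomputable section

/-- The metric speed of a curve `β` at time `t` w.r.t. a distance function `dist`. -/
def mSpeed {X : Type*} (dst : X → X → ℝ) (β : ℝ → X) (t : ℝ) : ℝ :=
  Filter.limsup (fun e : ℝ => dst (β (t + e)) (β t) / |e|) (nhdsWithin (0 : ℝ) {0}ᶜ)

/-- The generalized metric speed `v_β(s,t)` of a curve `β` w.r.t. the family of
metrics `d`. -/
def genSpeed {X : Type*} (d : ℝ → X → X → ℝ) (β : ℝ → X) (s t : ℝ) : ℝ :=
  Filter.limsup (fun e : ℝ => (∫ u in t..(t + e), mSpeed (d s) β u) / e)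
    (nhdsWithin (0 : ℝ) {0}ᶜ)

/-- Absolute continuity of a curve on `[a,b]` w.r.t. a distance function. -/
def ACOn {X : Type*} (dst : X → X → ℝ) (β : ℝ → X) (a b : ℝ) : Prop :=
  ∃ g : ℝ → ℝ, MeasureTheory.IntegrableOn g (Set.Icc a b) ∧
    ∀ ⦃t u : ℝ⦄, t ∈ Set.Icc a b → u ∈ Set.Icc a b → t ≤ u →
      dst (β t) (β u) ≤ ∫ r in t..u, g r

/-- The standard distance on `ℝ`. -/
def rdist : ℝ → ℝ → ℝ := fun x y => |x - y|

/-- `d` is a family of metrics on `X` indexed by `s ∈ I`, each generating the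
topology of `X`. -/
def IsMetricFamily {X : Type*} [TopologicalSpace X] (I : Set ℝ) (d : ℝ → X → X → ℝ) : Prop :=
  ∀ s ∈ I,
    (∀ x : X, d s x x = 0) ∧ (∀ x y : X, x ≠ y → 0 < d s x y) ∧
    (∀ x y : X, d s x y = d s y x) ∧ (∀ x y z : X, d s x z ≤ d s x y + d s y z) ∧
    (∀ x : X, (nhds x).HasBasis (fun ε : ℝ => 0 < ε) (fun ε => {y | d s x y < ε}))

/-- Condition (C): local uniform continuity of `s ↦ d_s` in a logarithmic sense. -/
def CondC {X : Type*} [TopologicalSpace X] (I : Set ℝ) (d : ℝ → X → X → ℝ) : Prop :=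
  ∀ J : Set ℝ, ∀ K : Set X, J ⊆ I → IsCompact J → IsCompact K →
    ∃ r > (0 : ℝ), ∃ ω : ℝ → ℝ, ω 0 = 0 ∧ Monotone ω ∧ ContinuousAt ω 0 ∧
      ∀ s ∈ J, ∀ s' ∈ J, ∀ x ∈ K, ∀ y ∈ K, x ≠ y →
        sInf ((fun u => d u x y) '' J) < r →
        |Real.log (d s x y / d s' x y)| ≤ ω |s - s'|

/-- Condition (L): local log-Lipschitz dependence of `d_s` on `s`. -/
def CondL {X : Type*} [TopologicalSpace X] (I : Set ℝ) (d : ℝ → X → X → ℝ) : Prop :=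
  ∀ J : Set ℝ, ∀ K : Set X, J ⊆ I → IsCompact J → IsCompact K →
    ∃ C > (0 : ℝ), ∃ r > (0 : ℝ),
      ∀ s ∈ J, ∀ s' ∈ J, ∀ x ∈ K, ∀ y ∈ K, x ≠ y →
        sInf ((fun u => d u x y) '' J) < r →
        |Real.log (d s x y / d s' x y)| ≤ C * |s - s'|

/-- Condition (H): Lipschitz continuity of `h` in the time variable, locally
uniformly. -/
def CondH {X : Type*} [TopologicalSpace X] (I : Set ℝ) (h : ℝ → X → ℝ) : Prop :=
  ∀ J : Set ℝ, ∀ K : Set X, J ⊆ I → IsCompact J → IsCompact K →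
    ∃ C' > (0 : ℝ), ∀ s ∈ J, ∀ s' ∈ J, ∀ x ∈ K, |h s x - h s' x| ≤ C' * |s - s'|

/-- A curve `(α, β) : [a,b] → I × X` with both components absolutely continuous. -/
def CurveIn {X : Type*} (I : Set ℝ) (d : ℝ → X → X → ℝ) (α : ℝ → ℝ) (β : ℝ → X)
    (a b : ℝ) : Prop :=
  a < b ∧ ACOn rdist α a b ∧ (∀ s ∈ I, ACOn (d s) β a b) ∧ ∀ t ∈ Set.Icc a b, α t ∈ I

/-- Future directed: `α' > 0` a.e. -/
def FutureDirected (α : ℝ → ℝ) (a b : ℝ) : Prop :=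
  ∀ᵐ t : ℝ, t ∈ Set.Ioo a b → 0 < deriv α t

/-- Past directed: `α' < 0` a.e. -/
def PastDirected (α : ℝ → ℝ) (a b : ℝ) : Prop :=
  ∀ᵐ t : ℝ, t ∈ Set.Ioo a b → deriv α t < 0

/-- The causality inequality `v_β(α_t,t)² ≤ h(γ_t)² α'(t)²` a.e. -/
def CausalIneq {X : Type*} (d : ℝ → X → X → ℝ) (h : ℝ → X → ℝ) (α : ℝ → ℝ)
    (β : ℝ → X) (a b : ℝ) : Prop :=
  ∀ᵐ t : ℝ, t ∈ Set.Ioo a b →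
    (genSpeed d β (α t) t) ^ 2 ≤ (h (α t) (β t)) ^ 2 * (deriv α t) ^ 2

/-- The timelike inequality `v_β(α_t,t)² < h(γ_t)² α'(t)²` a.e. -/
def TimelikeIneq {X : Type*} (d : ℝ → X → X → ℝ) (h : ℝ → X → ℝ) (α : ℝ → ℝ)
    (β : ℝ → X) (a b : ℝ) : Prop :=
  ∀ᵐ t : ℝ, t ∈ Set.Ioo a b →
    (genSpeed d β (α t) t) ^ 2 < (h (α t) (β t)) ^ 2 * (deriv α t) ^ 2

/-- Future directed causal curve. -/
def FutureCausal {X : Type*} (I : Set ℝ) (d : ℝ → X → X → ℝ) (h : ℝ → X → ℝ)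
    (α : ℝ → ℝ) (β : ℝ → X) (a b : ℝ) : Prop :=
  CurveIn I d α β a b ∧ FutureDirected α a b ∧ CausalIneq d h α β a b

/-- Future directed timelike curve. -/
def FutureTimelike {X : Type*} (I : Set ℝ) (d : ℝ → X → X → ℝ) (h : ℝ → X → ℝ)
    (α : ℝ → ℝ) (β : ℝ → X) (a b : ℝ) : Prop :=
  CurveIn I d α β a b ∧ FutureDirected α a b ∧ TimelikeIneq d h α β a b

/-- Causal curve (future or past directed). -/
def CausalCurve {X : Type*} (I : Set ℝ) (d : ℝ → X → X → ℝ) (h : ℝ → X → ℝ)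
    (α : ℝ → ℝ) (β : ℝ → X) (a b : ℝ) : Prop :=
  CurveIn I d α β a b ∧ (FutureDirected α a b ∨ PastDirected α a b) ∧
    CausalIneq d h α β a b

/-- The causal relation `p ≤ q` in the generalized Lorentzian product. -/
def causalRel {X : Type*} (I : Set ℝ) (d : ℝ → X → X → ℝ) (h : ℝ → X → ℝ)
    (p q : ℝ × X) : Prop :=
  ∃ a b α β, FutureCausal I d h α β a b ∧
    α a = p.1 ∧ β a = p.2 ∧ α b = q.1 ∧ β b = q.2

/-- The chronological relation `p ≪ q` in the generalized Lorentzian product. -/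
def chronRel {X : Type*} (I : Set ℝ) (d : ℝ → X → X → ℝ) (h : ℝ → X → ℝ)
    (p q : ℝ × X) : Prop :=
  ∃ a b α β, FutureTimelike I d h α β a b ∧
    α a = p.1 ∧ β a = p.2 ∧ α b = q.1 ∧ β b = q.2

/-- The Lorentzian length of a curve. -/
def lorLen {X : Type*} (d : ℝ → X → X → ℝ) (h : ℝ → X → ℝ) (α : ℝ → ℝ) (β : ℝ → X)
    (a b : ℝ) : ℝ :=
  ∫ t in a..b,
    Real.sqrt ((h (α t) (β t)) ^ 2 * (deriv α t) ^ 2 - (genSpeed d β (α t) t) ^ 2)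

/-- The time separation function `τ` of the generalized Lorentzian product. -/
def timeSep {X : Type*} (I : Set ℝ) (d : ℝ → X → X → ℝ) (h : ℝ → X → ℝ)
    (p q : ℝ × X) : ℝ≥0∞ :=
  sSup {l | ∃ a b α β, FutureCausal I d h α β a b ∧
    α a = p.1 ∧ β a = p.2 ∧ α b = q.1 ∧ β b = q.2 ∧
    l = ENNReal.ofReal (lorLen d h α β a b)}

end

noncomputable section

open Filter MeasureTheory Set Topology
open scoped ENNReal

/-- The length of a curve `β : [0,1] → X` weighted by the conformal factor `g`. -/
def confLen {X : Type*} [MetricSpace X] (g : X → ℝ) (β : ℝ → X) : ℝ :=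
  ∫ t in (0 : ℝ)..1, g (β t) * mSpeed (fun a b : X => dist a b) β t

/-- The conformally weighted length metric `d_g`. -/
def confMetric {X : Type*} [MetricSpace X] (g : X → ℝ) (x y : X) : ℝ :=
  sInf {l | ∃ β : ℝ → X, ACOn (fun a b : X => dist a b) β 0 1 ∧
    β 0 = x ∧ β 1 = y ∧ l = confLen g β}

/-- `X` is a length space: the distance is the infimum of lengths of absolutely
continuous curves. -/
def IsLengthMetric (X : Type*) [MetricSpace X] : Prop :=
  ∀ x y : X, dist x y = confMetric (fun _ => (1 : ℝ)) x y

/-- Local Lipschitz continuity of a function on `I × X`. -/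
def LocLipOn {X : Type*} [MetricSpace X] (I : Set ℝ) (f : ℝ → X → ℝ) : Prop :=
  ∀ J : Set ℝ, ∀ K : Set X, J ⊆ I → IsCompact J → IsCompact K →
    ∃ C : ℝ, ∀ s ∈ J, ∀ s' ∈ J, ∀ x ∈ K, ∀ y ∈ K,
      |f s x - f s' y| ≤ C * (|s - s'| + dist x y)

theorem absolutelyContinuousOnInterval_of_dist_le {Y : Type*} [PseudoMetricSpace Y] {f : ℝ → Y}
    {g : ℝ → ℝ} {a b : ℝ} (hab : a ≤ b) (hg : IntegrableOn g (Icc a b))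
    (hfg : ∀ ⦃t u : ℝ⦄, t ∈ Icc a b → u ∈ Icc a b → t ≤ u → dist (f t) (f u) ≤ ∫ r in t..u, g r) :
    AbsolutelyContinuousOnInterval f a b := by
  have hgi : IntervalIntegrable g volume a b :=
    (intervalIntegrable_iff_integrableOn_Icc_of_le hab).2 hg
  have hG := hgi.absolutelyContinuousOnInterval_intervalIntegral (left_mem_uIcc)
  have hgi' : ∀ t ∈ Icc a b, IntervalIntegrable g volume a t := fun t ht =>
    hgi.mono_set (by rw [uIcc_of_le hab, uIcc_of_le ht.1]; exact Icc_subset_Icc le_rfl ht.2)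
  have key : ∀ t ∈ Icc a b, ∀ u ∈ Icc a b,
      dist (f t) (f u) ≤ dist (∫ v in a..t, g v) (∫ v in a..u, g v) := by
    have main : ∀ t ∈ Icc a b, ∀ u ∈ Icc a b, t ≤ u →
        dist (f t) (f u) ≤ dist (∫ v in a..t, g v) (∫ v in a..u, g v) := by
      intro t ht u hu htu
      refine (hfg ht hu htu).trans ?_
      rw [dist_comm, Real.dist_eq, intervalIntegral.integral_interval_sub_left (hgi' u hu)
        (hgi' t ht)]
      exact le_abs_self _
    intro t ht u hu
    rcases le_total t u with htu | htu
    · exact main t ht u hu htu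
    · rw [dist_comm, dist_comm (∫ v in a..t, g v)]
      exact main u hu t ht htu
  unfold AbsolutelyContinuousOnInterval at hG ⊢
  refine tendsto_of_tendsto_of_tendsto_of_le_of_le' tendsto_const_nhds hG
    (Eventually.of_forall fun E => Finset.sum_nonneg fun _ _ => dist_nonneg) ?_
  filter_upwards [mem_inf_of_right (mem_principal_self _)] with E hE
  refine Finset.sum_le_sum fun i hi => ?_
  have := hE.1 i hi
  rw [uIcc_of_le hab] at this
  exact key _ this.1 _ this.2

theorem ACOn.absolutelyContinuousOnInterval {f : ℝ → ℝ} {a b : ℝ} (hab : a ≤ b)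
    (hf : ACOn rdist f a b) : AbsolutelyContinuousOnInterval f a b := by
  obtain ⟨g, hg, hfg⟩ := hf
  exact absolutelyContinuousOnInterval_of_dist_le hab hg fun t u ht hu htu => by
    simpa [rdist, Real.dist_eq] using hfg ht hu htu

theorem ACOn.sub_eq_integral_deriv {f : ℝ → ℝ} {a b : ℝ} (hab : a ≤ b)
    (hf : ACOn rdist f a b) :
    IntervalIntegrable (deriv f) volume a b ∧ f b - f a = ∫ t in a..b, deriv f t :=
  ⟨(hf.absolutelyContinuousOnInterval hab).intervalIntegrable_deriv,
    (hf.absolutelyContinuousOnInterval hab).integral_deriv_eq_sub.symm⟩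

theorem ACOn.lt_of_deriv_pos {f : ℝ → ℝ} {a b : ℝ} (hab : a < b) (hf : ACOn rdist f a b)
    (hpos : ∀ᵐ t : ℝ, t ∈ Ioo a b → 0 < deriv f t) : f a < f b := by
  obtain ⟨hi, he⟩ := hf.sub_eq_integral_deriv hab.le
  have hpos' : ∀ᵐ t ∂(volume.restrict (Ioc a b)), 0 < deriv f t := by
    rw [← Measure.restrict_congr_set Ioo_ae_eq_Ioc]
    exact (ae_restrict_iff' measurableSet_Ioo).2 hpos
  have : 0 < ∫ t in a..b, deriv f t := by
    rw [intervalIntegral.integral_pos_iff_support_of_nonneg_ae'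
      (by rw [uIoc_of_le hab.le]; exact hpos'.mono fun t ht => ht.le) hi]
    refine ⟨hab, ?_⟩
    have h1 : volume.restrict (Ioc a b) (Function.support (deriv f)) =
        volume.restrict (Ioc a b) univ :=
      measure_congr (by
        filter_upwards [hpos'] with t ht
        exact propext ⟨fun _ => trivial, fun _ => ht.ne'⟩)
    rw [Measure.restrict_apply_univ, Measure.restrict_apply'
      measurableSet_Ioc] at h1
    rw [h1]
    simp [hab]
  linarith

theorem ACOn.neg {f : ℝ → ℝ} {a b : ℝ} (hf : ACOn rdist f a b) :
    ACOn rdist (fun t => -f t) a b := by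
  obtain ⟨g, hg, hfg⟩ := hf
  refine ⟨g, hg, fun t u ht hu htu => ?_⟩
  have := hfg ht hu htu
  unfold rdist at this ⊢
  rwa [neg_sub_neg, abs_sub_comm]

theorem ACOn.lt_of_deriv_neg {f : ℝ → ℝ} {a b : ℝ} (hab : a < b) (hf : ACOn rdist f a b)
    (hneg : ∀ᵐ t : ℝ, t ∈ Ioo a b → deriv f t < 0) : f b < f a := by
  have := hf.neg.lt_of_deriv_pos hab (by
    filter_upwards [hneg] with t ht hmem
    rw [deriv.fun_neg]
    linarith [ht hmem])
  linarith

theorem ae_tendsto_average {G : ℝ → ℝ} {a b : ℝ} (hab : a ≤ b)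
    (hG : IntegrableOn G (Icc a b)) :
    ∀ᵐ t : ℝ, t ∈ Ioo a b →
      Tendsto (fun e : ℝ => (∫ u in t..(t + e), G u) / e) (𝓝[≠] 0) (𝓝 (G t)) := by
  have hgi : IntervalIntegrable G volume a b :=
    (intervalIntegrable_iff_integrableOn_Icc_of_le hab).2 hG
  filter_upwards [hgi.ae_hasDerivAt_integral] with t ht hmem
  have hmem' : t ∈ uIcc a b := by
    rw [uIcc_of_le hab]; exact Ioo_subset_Icc_self hmem
  have := (ht hmem' t hmem').tendsto_slope_zero
  simpa [div_eq_inv_mul] using this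

theorem mSpeed_nonneg {X : Type*} {dst : X → X → ℝ} (hd : ∀ x y, 0 ≤ dst x y) (β : ℝ → X)
    (t : ℝ) : 0 ≤ mSpeed dst β t := by
  unfold mSpeed
  rw [limsup_eq]
  refine Real.sInf_nonneg fun c hc => ?_
  obtain ⟨e, he⟩ := Eventually.exists (f := 𝓝[≠] (0 : ℝ)) hc
  exact (div_nonneg (hd _ _) (abs_nonneg _)).trans he

theorem mSpeed_le_of_eventually_le {X : Type*} {dst : X → X → ℝ} (hd : ∀ x y, 0 ≤ dst x y)
    {β : ℝ → X} {t l : ℝ} {q : ℝ → ℝ} (hq : Tendsto q (𝓝[≠] 0) (𝓝 l))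
    (hle : ∀ᶠ e in 𝓝[≠] (0 : ℝ), dst (β (t + e)) (β t) / |e| ≤ q e) :
    IsBoundedUnder (· ≤ ·) (𝓝[≠] (0 : ℝ)) (fun e => dst (β (t + e)) (β t) / |e|) ∧
      mSpeed dst β t ≤ l := by
  refine ⟨hq.isBoundedUnder_le.mono_le hle, ?_⟩
  unfold mSpeed
  rw [← hq.limsup_eq]
  refine limsup_le_limsup hle ?_ hq.isBoundedUnder_le
  exact IsBoundedUnder.isCoboundedUnder_le
    (isBoundedUnder_of ⟨0, fun e => div_nonneg (hd _ _) (abs_nonneg _)⟩)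

theorem tendsto_add_nhds (t : ℝ) : Tendsto (fun e : ℝ => t + e) (𝓝[≠] 0) (𝓝 t) := by
  have h : ContinuousAt (fun e : ℝ => t + e) 0 := by fun_prop
  have h' : Tendsto (fun e : ℝ => t + e) (𝓝 0) (𝓝 (t + 0)) := h
  rw [add_zero] at h'
  exact h'.mono_left nhdsWithin_le_nhds

theorem measurable_limsup_quotient {X : Type*} [PseudoMetricSpace X] {β : ℝ → X}
    (hβ : Continuous β) :
    Measurable fun t => limsup (fun e : ℝ => ENNReal.ofReal (dist (β (t + e)) (β t) / |e|))
      (𝓝[≠] 0) := by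
  have hb := nhdsWithin_hasBasis (Metric.nhds_basis_ball_inv_nat_succ (x := (0 : ℝ))) {0}ᶜ
  simp_rw [hb.limsup_eq_iInf_iSup]
  refine Measurable.iInf fun n => ?_
  simp only [ciInf_unique]
  refine LowerSemicontinuous.measurable ?_
  refine lowerSemicontinuous_iSup fun e => lowerSemicontinuous_iSup fun _ => ?_
  exact (ENNReal.continuous_ofReal.comp (by fun_prop)).lowerSemicontinuous

theorem toReal_limsup_quotient {X : Type*} [PseudoMetricSpace X] {β : ℝ → X} {t : ℝ}
    (hb : IsBoundedUnder (· ≤ ·) (𝓝[≠] (0 : ℝ)) (fun e => dist (β (t + e)) (β t) / |e|)) :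
    (limsup (fun e : ℝ => ENNReal.ofReal (dist (β (t + e)) (β t) / |e|)) (𝓝[≠] 0)).toReal =
      mSpeed (fun x y : X => dist x y) β t := by
  have hco : IsCoboundedUnder (· ≤ ·) (𝓝[≠] (0 : ℝ)) (fun e => dist (β (t + e)) (β t) / |e|) :=
    IsBoundedUnder.isCoboundedUnder_le
      (isBoundedUnder_of ⟨0, fun e => div_nonneg (dist_nonneg (x := β (t + e)) (y := β t))
        (abs_nonneg e)⟩)
  have h := Monotone.map_limsup_of_continuousAt (F := 𝓝[≠] (0 : ℝ)) (f := ENNReal.ofReal)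
    (fun _ _ hxy => ENNReal.ofReal_le_ofReal hxy)
    (fun e => dist (β (t + e)) (β t) / |e|) ENNReal.continuous_ofReal.continuousAt hb hco
  have h0 : 0 ≤ limsup (fun e : ℝ => dist (β (t + e)) (β t) / |e|) (𝓝[≠] 0) :=
    mSpeed_nonneg (dst := dist) (fun _ _ => dist_nonneg) β t
  have h' := congrArg ENNReal.toReal h
  rw [ENNReal.toReal_ofReal h0] at h'
  exact h'.symm

theorem aemeasurable_mSpeed {X : Type*} [PseudoMetricSpace X] {β : ℝ → X} {a b : ℝ} (hab : a ≤ b)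
    (hβ : ContinuousOn β (Icc a b))
    (hb : ∀ᵐ t : ℝ, t ∈ Ioo a b → IsBoundedUnder (· ≤ ·) (𝓝[≠] (0 : ℝ))
      (fun e => dist (β (t + e)) (β t) / |e|)) :
    AEMeasurable (mSpeed (fun x y : X => dist x y) β) (volume.restrict (Ioo a b)) := by
  set β' : ℝ → X := IccExtend hab ((Icc a b).domRestrict β) with hβ'
  have hcont : Continuous β' := (continuousOn_iff_continuous_domRestrict.1 hβ).Icc_extend'
  refine ⟨_, (measurable_limsup_quotient hcont).ennreal_toReal, ?_⟩
  refine (ae_restrict_iff' measurableSet_Ioo).2 ?_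
  filter_upwards [hb] with t ht hmem
  have heq : β =ᶠ[𝓝 t] β' := by
    filter_upwards [Ioo_mem_nhds hmem.1 hmem.2] with u hu
    rw [hβ', IccExtend_of_mem _ _ (Ioo_subset_Icc_self hu)]
    rfl
  rw [← toReal_limsup_quotient (ht hmem)]
  congr 1
  refine limsup_congr ?_
  filter_upwards [(tendsto_add_nhds t).eventually heq] with e he
  rw [he, heq.self_of_nhds]

theorem ACOn.mono {X : Type*} {dst : X → X → ℝ} {β : ℝ → X} {a b c e : ℝ}
    (hβ : ACOn dst β a b) (hsub : Icc c e ⊆ Icc a b) : ACOn dst β c e := by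
  obtain ⟨g, hg, hle⟩ := hβ
  exact ⟨g, hg.mono_set hsub, fun t u ht hu htu => hle (hsub ht) (hsub hu) htu⟩

theorem integrableOn_mSpeed_of_eventually_le {X : Type*} [PseudoMetricSpace X] {β : ℝ → X}
    {a b c : ℝ} (hab : a ≤ b) (hβ : ContinuousOn β (Icc a b)) {G : ℝ → ℝ}
    (hG : IntegrableOn G (Icc a b))
    (hle : ∀ t ∈ Ioo a b, ∀ᶠ u in 𝓝 t, (t ≤ u → dist (β u) (β t) ≤ c * ∫ r in t..u, G r) ∧
      (u ≤ t → dist (β u) (β t) ≤ c * ∫ r in u..t, G r)) :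
    IntegrableOn (mSpeed (fun x y : X => dist x y) β) (Ioo a b) ∧
      ∀ᵐ t : ℝ, t ∈ Ioo a b → IsBoundedUnder (· ≤ ·) (𝓝[≠] (0 : ℝ))
        (fun e => dist (β (t + e)) (β t) / |e|) := by
  have key : ∀ᵐ t : ℝ, t ∈ Ioo a b → IsBoundedUnder (· ≤ ·) (𝓝[≠] (0 : ℝ))
        (fun e => dist (β (t + e)) (β t) / |e|) ∧
        mSpeed (fun x y : X => dist x y) β t ≤ c * G t := by
    filter_upwards [ae_tendsto_average hab hG] with t ht hmem
    refine mSpeed_le_of_eventually_le (dst := fun x y : X => dist x y) (fun _ _ => dist_nonneg)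
      ((ht hmem).const_mul c) ?_
    filter_upwards [(tendsto_add_nhds t).eventually (hle t hmem), self_mem_nhdsWithin]
      with e he hne
    rcases lt_or_gt_of_ne (show e ≠ 0 from hne) with h | h
    · rw [abs_of_neg h, intervalIntegral.integral_symm, neg_div, ← div_neg, ← mul_div_assoc]
      have : 0 ≤ -e := by linarith
      gcongr
      exact he.2 (by linarith)
    · rw [abs_of_pos h, ← mul_div_assoc]
      gcongr
      exact he.1 (by linarith)
  have hbdd := key.mono fun t ht hmem => (ht hmem).1
  refine ⟨?_, hbdd⟩
  refine Integrable.mono' ((hG.mono_set Ioo_subset_Icc_self).const_mul c)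
    (aemeasurable_mSpeed hab hβ hbdd).aestronglyMeasurable ?_
  refine (ae_restrict_iff' measurableSet_Ioo).2 ?_
  filter_upwards [key] with t ht hmem
  rw [Real.norm_of_nonneg (mSpeed_nonneg (fun _ _ => dist_nonneg) β t)]
  exact (ht hmem).2

theorem tendsto_integral_nhdsWithin {g : ℝ → ℝ} {a b t : ℝ} (hg : IntegrableOn g (Icc a b))
    (ht : t ∈ Icc a b) :
    Tendsto (fun u => |∫ r in t..u, g r|) (𝓝[Icc a b] t) (𝓝 0) := by
  have hab := ht.1.trans ht.2
  have hgi : IntervalIntegrable g volume a b :=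
    (intervalIntegrable_iff_integrableOn_Icc_of_le hab).2 hg
  have h := (hgi.absolutelyContinuousOnInterval_intervalIntegral (c := t)
    (by rwa [uIcc_of_le hab])).continuousOn
  rw [uIcc_of_le hab] at h
  simpa using (h t ht).tendsto.abs

theorem ACOn.continuousOn {X : Type*} [PseudoMetricSpace X] {β : ℝ → X} {a b : ℝ}
    (hβ : ACOn (fun x y : X => dist x y) β a b) : ContinuousOn β (Icc a b) := by
  obtain ⟨g, hg, hle⟩ := hβ
  intro t ht
  refine tendsto_iff_dist_tendsto_zero.2 (squeeze_zero' (Eventually.of_forall fun _ => dist_nonneg)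
    ?_ (tendsto_integral_nhdsWithin hg ht))
  filter_upwards [self_mem_nhdsWithin] with u hu
  rcases le_total t u with h | h
  · rw [dist_comm]
    exact (hle ht hu h).trans (le_abs_self _)
  · rw [intervalIntegral.integral_symm, abs_neg]
    exact (hle hu ht h).trans (le_abs_self _)

theorem ACOn.integrableOn_mSpeed {X : Type*} [PseudoMetricSpace X] {β : ℝ → X} {a b : ℝ}
    (hab : a ≤ b) (hβ : ACOn (fun x y : X => dist x y) β a b) :
    IntegrableOn (mSpeed (fun x y : X => dist x y) β) (Ioo a b) ∧
      ∀ᵐ t : ℝ, t ∈ Ioo a b → IsBoundedUnder (· ≤ ·) (𝓝[≠] (0 : ℝ))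
        (fun e => dist (β (t + e)) (β t) / |e|) := by
  have hc := hβ.continuousOn
  obtain ⟨g, hg, hle⟩ := hβ
  refine integrableOn_mSpeed_of_eventually_le (c := 1) hab hc hg fun t ht => ?_
  filter_upwards [Ioo_mem_nhds ht.1 ht.2] with u hu
  rw [one_mul, one_mul]
  exact ⟨fun h => by
    rw [dist_comm]
    exact hle (Ioo_subset_Icc_self ht) (Ioo_subset_Icc_self hu) h,
    fun h => hle (Ioo_subset_Icc_self hu) (Ioo_subset_Icc_self ht) h⟩

theorem intervalIntegrable_iff_Ioo {f : ℝ → ℝ} {a b : ℝ} (hab : a ≤ b) :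
    IntervalIntegrable f volume a b ↔ IntegrableOn f (Ioo a b) := by
  rw [intervalIntegrable_iff_integrableOn_Ioc_of_le hab, integrableOn_Ioc_iff_integrableOn_Ioo]

theorem abs_deriv_comp_le_mSpeed {X : Type*} [PseudoMetricSpace X] {φ : X → ℝ}
    (hφ : LipschitzWith 1 φ) {β : ℝ → X} {t : ℝ} (hd : DifferentiableAt ℝ (fun s => φ (β s)) t)
    (hb : IsBoundedUnder (· ≤ ·) (𝓝[≠] (0 : ℝ)) (fun e => dist (β (t + e)) (β t) / |e|)) :
    |deriv (fun s => φ (β s)) t| ≤ mSpeed (fun x y : X => dist x y) β t := by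
  have hlim := hd.hasDerivAt.tendsto_slope_zero.abs
  rw [← hlim.limsup_eq]
  refine limsup_le_limsup (Eventually.of_forall fun e => ?_)
    hlim.isBoundedUnder_ge.isCoboundedUnder_le hb
  change |e⁻¹ • (φ (β (t + e)) - φ (β t))| ≤ dist (β (t + e)) (β t) / |e|
  rw [smul_eq_mul, abs_mul, abs_inv, ← div_eq_inv_mul]
  gcongr
  simpa [Real.dist_eq] using hφ.dist_le_mul (β (t + e)) (β t)

theorem ACOn.comp_lipschitz {X : Type*} [PseudoMetricSpace X] {φ : X → ℝ}
    (hφ : LipschitzWith 1 φ) {β : ℝ → X} {a b : ℝ}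
    (hβ : ACOn (fun x y : X => dist x y) β a b) : ACOn rdist (fun t => φ (β t)) a b := by
  obtain ⟨g, hg, hle⟩ := hβ
  refine ⟨g, hg, fun t u ht hu htu => le_trans ?_ (hle ht hu htu)⟩
  simpa [Real.dist_eq, rdist] using hφ.dist_le_mul (β t) (β u)

theorem ACOn.mul_abs_sub_le_integral {X : Type*} [PseudoMetricSpace X] {φ : X → ℝ}
    (hφ : LipschitzWith 1 φ) {β : ℝ → X} {a b m : ℝ} (hab : a ≤ b) (hm : 0 ≤ m)
    (hβ : ACOn (fun x y : X => dist x y) β a b) {k : ℝ → ℝ}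
    (hk : IntervalIntegrable k volume a b)
    (hle : ∀ t ∈ Ioo a b, (|deriv (fun s => φ (β s)) t| ≤ mSpeed (fun x y : X => dist x y) β t) →
      m * |deriv (fun s => φ (β s)) t| ≤ k t) :
    m * |φ (β b) - φ (β a)| ≤ ∫ t in a..b, k t := by
  have hac := hβ.comp_lipschitz hφ
  obtain ⟨hi, he⟩ := hac.sub_eq_integral_deriv hab
  have hdiff := (hac.absolutelyContinuousOnInterval hab).ae_differentiableAt
  have hbdd := (hβ.integrableOn_mSpeed hab).2
  rw [he]
  calc m * |∫ t in a..b, deriv (fun s => φ (β s)) t|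
      ≤ m * ∫ t in a..b, |deriv (fun s => φ (β s)) t| := by
        gcongr
        exact intervalIntegral.abs_integral_le_integral_abs hab
    _ = ∫ t in a..b, m * |deriv (fun s => φ (β s)) t| := by
        rw [intervalIntegral.integral_const_mul]
    _ ≤ ∫ t in a..b, k t := by
        refine intervalIntegral.integral_mono_ae_restrict hab (hi.abs.const_mul m) hk ?_
        rw [← Measure.restrict_congr_set Ioo_ae_eq_Icc]
        refine (ae_restrict_iff' measurableSet_Ioo).2 ?_
        filter_upwards [hdiff, hbdd] with t h1 h2 hmem
        refine hle t hmem (abs_deriv_comp_le_mSpeed hφ (h1 ?_) (h2 hmem))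
        rw [uIcc_of_le hab]
        exact Ioo_subset_Icc_self hmem

theorem ACOn.dist_le_integral_mSpeed {X : Type*} [PseudoMetricSpace X] {β : ℝ → X} {a b : ℝ}
    (hab : a ≤ b) (hβ : ACOn (fun x y : X => dist x y) β a b) :
    dist (β a) (β b) ≤ ∫ t in a..b, mSpeed (fun x y : X => dist x y) β t := by
  have := hβ.mul_abs_sub_le_integral (LipschitzWith.dist_left (β b)) hab zero_le_one
    ((intervalIntegrable_iff_Ioo hab).2 (hβ.integrableOn_mSpeed hab).1)
    (fun t _ h => by rwa [one_mul])
  simpa using this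

theorem intervalIntegrable_mul_mSpeed {X : Type*} [PseudoMetricSpace X] {g : X → ℝ}
    (hg : Continuous g) {β : ℝ → X} {a b : ℝ} (hab : a ≤ b)
    (hβ : ACOn (fun x y : X => dist x y) β a b) :
    IntervalIntegrable (fun t => g (β t) * mSpeed (fun x y : X => dist x y) β t) volume a b := by
  refine ((intervalIntegrable_iff_Ioo hab).2 (hβ.integrableOn_mSpeed hab).1).continuousOn_mul ?_
  rw [uIcc_of_le hab]
  exact hg.comp_continuousOn (hβ.continuousOn)

theorem confLen_nonneg {X : Type*} [MetricSpace X] {g : X → ℝ} (hg : ∀ x, 0 ≤ g x)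
    (β : ℝ → X) : 0 ≤ confLen g β :=
  intervalIntegral.integral_nonneg zero_le_one fun t _ =>
    mul_nonneg (hg _) (mSpeed_nonneg (fun _ _ => dist_nonneg) β t)

theorem IsLengthMetric.exists_path {X : Type*} [MetricSpace X] (hlen : IsLengthMetric X)
    (x y : X) : ∃ β : ℝ → X, ACOn (fun a b : X => dist a b) β 0 1 ∧ β 0 = x ∧ β 1 = y := by
  by_cases hxy : x = y
  · subst hxy
    exact ⟨fun _ => x, ⟨fun _ => 0, integrableOn_zero, fun t u _ _ _ => by simp⟩, rfl, rfl⟩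
  · by_contra hne
    have h := hlen x y
    unfold confMetric at h
    have hempty : {l | ∃ β : ℝ → X, ACOn (fun a b : X => dist a b) β 0 1 ∧
        β 0 = x ∧ β 1 = y ∧ l = confLen (fun _ => (1 : ℝ)) β} = ∅ := by
      refine eq_empty_of_forall_notMem ?_
      rintro l ⟨β, h1, h2, h3, -⟩
      exact hne ⟨β, h1, h2, h3⟩
    rw [hempty, Real.sInf_empty] at h
    exact hxy (dist_eq_zero.1 h)

theorem IsLengthMetric.mul_abs_min_sub_min_le_confMetric {X : Type*} [MetricSpace X]
    (hlen : IsLengthMetric X) {g : X → ℝ} (hg : Continuous g) (hg0 : ∀ x, 0 ≤ g x) {m r : ℝ}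
    (hm : 0 ≤ m) {z : X} (hmg : ∀ x, dist x z ≤ r → m ≤ g x) (x y : X) :
    m * |min r (dist y z) - min r (dist x z)| ≤ confMetric g x y := by
  obtain ⟨β₀, h0, hx0, hy0⟩ := hlen.exists_path x y
  refine le_csInf ⟨_, β₀, h0, hx0, hy0, rfl⟩ ?_
  rintro l ⟨β, hβ, rfl, rfl, rfl⟩
  have hφ : LipschitzWith 1 (fun x : X => min r (dist x z)) :=
    (LipschitzWith.dist_left z).const_min r
  refine hβ.mul_abs_sub_le_integral hφ zero_le_one hm
    (intervalIntegrable_mul_mSpeed hg zero_le_one hβ) fun t ht hle => ?_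
  rcases le_or_gt (dist (β t) z) r with h | h
  · exact mul_le_mul (hmg _ h) hle (abs_nonneg _) (hg0 _)
  · have hev : (fun s => min r (dist (β s) z)) =ᶠ[𝓝 t] fun _ => r := by
      have hc : ContinuousAt (fun s => dist (β s) z) t :=
        (hβ.continuousOn.continuousAt
          (Icc_mem_nhds ht.1 ht.2)).dist continuousAt_const
      filter_upwards [hc.eventually (lt_mem_nhds h)] with s hs
      exact min_eq_left hs.le
    rw [hev.deriv_eq]
    simpa using mul_nonneg (hg0 (β t)) (mSpeed_nonneg (fun _ _ => dist_nonneg) β t)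

theorem IsLengthMetric.confMetric_le {X : Type*} [MetricSpace X]
    (hlen : IsLengthMetric X) {g : X → ℝ} (hg : Continuous g) (hg0 : ∀ x, 0 ≤ g x) {M r : ℝ}
    {x y : X} (hMg : ∀ z, dist z y ≤ r → g z ≤ M) (hxy : dist x y < r) :
    confMetric g x y ≤ M * dist x y := by
  have hM : 0 ≤ M := (hg0 y).trans (hMg y (by rw [dist_self]; exact dist_nonneg.trans hxy.le))
  have key : ∀ L ∈ Ioo (dist x y) r, confMetric g x y ≤ M * L := by
    rintro L ⟨hL, hLr⟩
    have hL' := hL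
    rw [hlen x y] at hL'
    obtain ⟨β₀, h0, hx0, hy0⟩ := hlen.exists_path x y
    have hne : {l | ∃ β : ℝ → X, ACOn (fun a b : X => dist a b) β 0 1 ∧
        β 0 = x ∧ β 1 = y ∧ l = confLen (fun _ => (1 : ℝ)) β}.Nonempty :=
      ⟨_, β₀, h0, hx0, hy0, rfl⟩
    obtain ⟨l, ⟨β, hβ, rfl, rfl, rfl⟩, hl⟩ := exists_lt_of_csInf_lt hne hL'
    unfold confLen at hl
    simp only [one_mul] at hl
    have hint : IntervalIntegrable (mSpeed (fun x y : X => dist x y) β) volume 0 1 :=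
      (intervalIntegrable_iff_Ioo zero_le_one).2 (hβ.integrableOn_mSpeed zero_le_one).1
    have hnear : ∀ t ∈ Icc (0 : ℝ) 1, g (β t) ≤ M := by
      intro t ht
      refine hMg _ (le_trans ?_ (hl.trans hLr).le)
      refine ((hβ.mono (Icc_subset_Icc_left ht.1)).dist_le_integral_mSpeed ht.2).trans ?_
      refine intervalIntegral.integral_mono_interval ht.1 ht.2 le_rfl
        (Eventually.of_forall fun u => mSpeed_nonneg (fun _ _ => dist_nonneg) β u) hint
    calc confMetric g (β 0) (β 1) ≤ confLen g β :=
          csInf_le ⟨0, by rintro l ⟨β, -, -, -, rfl⟩; exact confLen_nonneg hg0 β⟩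
            ⟨β, hβ, rfl, rfl, rfl⟩
      _ ≤ ∫ t in (0 : ℝ)..1, M * mSpeed (fun x y : X => dist x y) β t := by
          refine intervalIntegral.integral_mono_on zero_le_one
            (intervalIntegrable_mul_mSpeed hg zero_le_one hβ) (hint.const_mul M) fun t ht => ?_
          exact mul_le_mul_of_nonneg_right (hnear t ht)
            (mSpeed_nonneg (fun _ _ => dist_nonneg) β t)
      _ ≤ M * L := by
          rw [intervalIntegral.integral_const_mul]
          exact mul_le_mul_of_nonneg_left hl.le hM
  have hlim : Tendsto (fun L => M * L) (𝓝[>] (dist x y)) (𝓝 (M * dist x y)) :=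
    (continuous_const_mul M).continuousAt.tendsto.mono_left nhdsWithin_le_nhds
  refine ge_of_tendsto hlim ?_
  filter_upwards [Ioo_mem_nhdsGT hxy] with L hL using key L hL

theorem LocLipOn.continuous {X : Type*} [MetricSpace X] [LocallyCompactSpace X] {I : Set ℝ}
    {f : ℝ → X → ℝ} (hf : LocLipOn I f) {s : ℝ} (hs : s ∈ I) : Continuous (f s) := by
  refine continuous_iff_continuousAt.2 fun x => ?_
  obtain ⟨K, hK, hKx⟩ := exists_compact_mem_nhds x
  obtain ⟨C, hC⟩ := hf {s} K (singleton_subset_iff.2 hs) isCompact_singleton hK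
  refine tendsto_iff_dist_tendsto_zero.2 (squeeze_zero' (Eventually.of_forall fun _ => dist_nonneg)
    (g := fun y => C * dist y x) ?_ ?_)
  · filter_upwards [hKx] with y hy
    simpa [Real.dist_eq] using hC s rfl s rfl y hy x (mem_of_mem_nhds hKx)
  · have : Continuous fun y => C * dist y x := by fun_prop
    simpa using this.tendsto x

theorem LocLipOn.continuousOn_comp {X : Type*} [MetricSpace X] {I : Set ℝ}
    {f : ℝ → X → ℝ} (hf : LocLipOn I f) {α : ℝ → ℝ} {β : ℝ → X} {T : Set ℝ} (hT : IsCompact T)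
    (hα : ContinuousOn α T) (hβ : ContinuousOn β T) (hαI : ∀ t ∈ T, α t ∈ I) :
    ContinuousOn (fun t => f (α t) (β t)) T := by
  obtain ⟨C, hC⟩ := hf (α '' T) (β '' T) (by rintro _ ⟨t, ht, rfl⟩; exact hαI t ht)
    (hT.image_of_continuousOn hα) (hT.image_of_continuousOn hβ)
  intro t ht
  refine tendsto_iff_dist_tendsto_zero.2 (squeeze_zero' (Eventually.of_forall fun _ => dist_nonneg)
    (g := fun u => C * (|α u - α t| + dist (β u) (β t))) ?_ ?_)
  · filter_upwards [self_mem_nhdsWithin] with u hu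
    exact hC _ (mem_image_of_mem α hu) _ (mem_image_of_mem α ht) _ (mem_image_of_mem β hu) _
      (mem_image_of_mem β ht)
  · have h1 := (hα t ht).tendsto.sub_const (α t)
    have h2 := tendsto_iff_dist_tendsto_zero.1 (hβ t ht).tendsto
    rw [sub_self] at h1
    simpa using (h1.abs.add h2).const_mul C

theorem tendsto_sub_mul_zero {ι : Type*} {F : Filter ι} {u w : ι → ℝ} {c : ℝ}
    (hb : IsBoundedUnder (· ≤ ·) F u)
    (h : ∀ ε > 0, ∀ᶠ i in F, |w i - c * u i| ≤ ε * u i) :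
    Tendsto (fun i => w i - c * u i) F (𝓝 0) := by
  obtain ⟨B, hB⟩ := hb
  rw [eventually_map] at hB
  refine Metric.tendsto_nhds.2 fun ε hε => ?_
  have hB' : 0 < |B| + 1 := by positivity
  filter_upwards [hB, h (ε / (|B| + 1)) (div_pos hε hB')] with i h1 h2
  rw [Real.dist_eq, sub_zero]
  calc |w i - c * u i| ≤ ε / (|B| + 1) * u i := h2
    _ ≤ ε / (|B| + 1) * |B| := by
        gcongr
        exact h1.trans (le_abs_self _)
    _ < ε / (|B| + 1) * (|B| + 1) := by gcongr; linarith
    _ = ε := by field_simp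

theorem limsup_eq_mul_limsup {ι : Type*} {F : Filter ι} [F.NeBot] {u w : ι → ℝ} {c : ℝ}
    (hc : 0 ≤ c) (hu : ∀ i, 0 ≤ u i) (hb : IsBoundedUnder (· ≤ ·) F u)
    (h : Tendsto (fun i => w i - c * u i) F (𝓝 0)) : limsup w F = c * limsup u F := by
  have hmono : Monotone fun x : ℝ => c * x := fun x y hxy => mul_le_mul_of_nonneg_left hxy hc
  have hbl : IsBoundedUnder (· ≥ ·) F u := isBoundedUnder_of ⟨0, fun i => hu i⟩
  have hcu := hmono.map_limsup_of_continuousAt u (continuous_const_mul c).continuousAt hb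
    hbl.isCoboundedUnder_le
  change c * limsup u F = limsup (fun i => c * u i) F at hcu
  rw [hcu]
  have hbcu : IsBoundedUnder (· ≤ ·) F fun i => c * u i := hb.comp (q := (· ≤ ·)) fun x y hxy =>
    mul_le_mul_of_nonneg_left hxy hc
  have hblcu : IsBoundedUnder (· ≥ ·) F fun i => c * u i :=
    isBoundedUnder_of ⟨0, fun i => mul_nonneg hc (hu i)⟩
  have hw : w = (fun i => c * u i) + fun i => w i - c * u i := by
    funext i
    simp
  rw [hw]
  refine le_antisymm ?_ ?_
  · refine (limsup_add_le hblcu hbcu h.isBoundedUnder_ge.isCoboundedUnder_le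
      h.isBoundedUnder_le).trans_eq ?_
    rw [h.limsup_eq, add_zero]
  · refine le_trans ?_ (le_limsup_add hbcu hblcu.isCoboundedUnder_le h.isBoundedUnder_le
      h.isBoundedUnder_ge)
    rw [h.liminf_eq, add_zero]

theorem exists_ball_forall_le {X : Type*} [MetricSpace X] {g : X → ℝ} (hg : Continuous g) (x : X)
    {U : Set ℝ} (hU : U ∈ 𝓝 (g x)) : ∃ r > 0, ∀ y, dist y x ≤ r → g y ∈ U := by
  obtain ⟨r, hr, hsub⟩ := Metric.nhds_basis_closedBall.mem_iff.1 (hg.continuousAt hU)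
  exact ⟨r, hr, fun y hy => hsub hy⟩

theorem IsLengthMetric.exists_mul_min_le_confMetric {X : Type*} [MetricSpace X]
    (hlen : IsLengthMetric X) {g : X → ℝ} (hg : Continuous g) (hg0 : ∀ x, 0 < g x) (x : X) {m : ℝ}
    (hm : 0 ≤ m) (hmx : m < g x) : ∃ r > 0, ∀ y, m * min r (dist y x) ≤ confMetric g x y ∧
      m * min r (dist y x) ≤ confMetric g y x := by
  obtain ⟨r, hr, hmg⟩ := exists_ball_forall_le hg x (lt_mem_nhds hmx)
  refine ⟨r, hr, fun y => ?_⟩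
  have hmin : 0 ≤ min r (dist y x) := le_min hr.le dist_nonneg
  have h1 := hlen.mul_abs_min_sub_min_le_confMetric hg (fun x => (hg0 x).le) hm
    (fun z hz => (hmg z hz).le) x y
  have h2 := hlen.mul_abs_min_sub_min_le_confMetric hg (fun x => (hg0 x).le) hm
    (fun z hz => (hmg z hz).le) y x
  rw [dist_self, min_eq_right hr.le] at h1 h2
  rw [sub_zero, abs_of_nonneg hmin] at h1
  rw [zero_sub, abs_neg, abs_of_nonneg hmin] at h2
  exact ⟨h1, h2⟩

theorem IsLengthMetric.eventually_abs_confMetric_sub_le {X : Type*} [MetricSpace X]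
    (hlen : IsLengthMetric X) {g : X → ℝ} (hg : Continuous g) (hg0 : ∀ x, 0 < g x) (x : X) {ε : ℝ}
    (hε : 0 < ε) : ∀ᶠ y in 𝓝 x, |confMetric g y x - g x * dist y x| ≤ ε * dist y x := by
  obtain ⟨R, hR, hMg⟩ := exists_ball_forall_le hg x (gt_mem_nhds (show g x < g x + ε by linarith))
  obtain ⟨r, hr, hlow⟩ := hlen.exists_mul_min_le_confMetric hg hg0 x (m := max (g x - ε) 0)
    (le_max_right _ _) (max_lt (by linarith) (hg0 x))
  filter_upwards [Metric.ball_mem_nhds x hR, Metric.ball_mem_nhds x hr] with y hyR hyr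
  rw [Metric.mem_ball] at hyR hyr
  have h1 := (hlow y).2
  rw [min_eq_right hyr.le] at h1
  have h2 := hlen.confMetric_le hg (fun x => (hg0 x).le) (fun z hz => (hMg z hz).le) hyR
  have h3 : (g x - ε) * dist y x ≤ max (g x - ε) 0 * dist y x := by
    gcongr
    exact le_max_left _ _
  rw [abs_le]
  constructor <;> linarith

theorem IsLengthMetric.mSpeed_confMetric {X : Type*} [MetricSpace X]
    (hlen : IsLengthMetric X) {g : X → ℝ} (hg : Continuous g) (hg0 : ∀ x, 0 < g x) {β : ℝ → X}
    {t : ℝ} (hβ : ContinuousAt β t)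
    (hb : IsBoundedUnder (· ≤ ·) (𝓝[≠] (0 : ℝ)) (fun e => dist (β (t + e)) (β t) / |e|)) :
    mSpeed (confMetric g) β t = g (β t) * mSpeed (fun x y : X => dist x y) β t := by
  unfold mSpeed
  refine limsup_eq_mul_limsup (hg0 _).le (fun e => div_nonneg dist_nonneg (abs_nonneg _)) hb
    (tendsto_sub_mul_zero hb fun ε hε => ?_)
  have hev := (hβ.tendsto.comp (tendsto_add_nhds t)).eventually
    (hlen.eventually_abs_confMetric_sub_le hg hg0 (β t) hε)
  filter_upwards [hev] with e he
  rw [← mul_div_assoc, ← sub_div, abs_div, abs_abs, ← mul_div_assoc]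
  gcongr
  exact he

theorem tendsto_average_mul {k v : ℝ → ℝ} {a b t : ℝ} (ht : t ∈ Ioo a b)
    (hk : ContinuousOn k (Icc a b)) (hv : IntegrableOn v (Ioo a b)) (hv0 : ∀ u, 0 ≤ v u)
    (hlim : Tendsto (fun e : ℝ => (∫ u in t..(t + e), v u) / e) (𝓝[≠] 0) (𝓝 (v t))) :
    Tendsto (fun e : ℝ => (∫ u in t..(t + e), k u * v u) / e) (𝓝[≠] 0) (𝓝 (k t * v t)) := by
  have hab := (ht.1.trans ht.2).le
  have hvi : IntervalIntegrable v volume a b := (intervalIntegrable_iff_Ioo hab).2 hv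
  have hkvi : IntervalIntegrable (fun u => k u * v u) volume a b :=
    hvi.continuousOn_mul (by rwa [uIcc_of_le hab])
  suffices h : Tendsto (fun e : ℝ => (∫ u in t..(t + e), k u * v u) / e -
      k t * ((∫ u in t..(t + e), v u) / e)) (𝓝[≠] 0) (𝓝 0) by
    have := h.add (hlim.const_mul (k t))
    simpa using this
  refine tendsto_sub_mul_zero hlim.isBoundedUnder_le fun ε hε => ?_
  have hkt : ContinuousAt k t := hk.continuousAt (Icc_mem_nhds ht.1 ht.2)
  obtain ⟨δ, hδ, hball⟩ := Metric.mem_nhds_iff.1 (inter_mem (Ioo_mem_nhds ht.1 ht.2)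
    (hkt.preimage_mem_nhds (Metric.closedBall_mem_nhds _ hε)))
  filter_upwards [(tendsto_add_nhds t).eventually (Metric.ball_mem_nhds t hδ),
    self_mem_nhdsWithin] with e he hne
  have hsub : uIcc t (t + e) ⊆ Metric.ball t δ := by
    have he' : t + e ∈ Metric.ball t δ := he
    rw [Real.ball_eq_Ioo] at he' ⊢
    exact Set.ordConnected_Ioo.uIcc_subset ⟨by linarith, by linarith⟩ he'
  have hsub' : uIcc t (t + e) ⊆ uIcc a b := by
    rw [uIcc_of_le hab]
    exact fun u hu => Ioo_subset_Icc_self (hball (hsub hu)).1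
  have hvi' := hvi.mono_set hsub'
  have hkvi' := hkvi.mono_set hsub'
  have hdiff : ‖∫ u in t..(t + e), (k u * v u - k t * v u)‖ ≤ |∫ u in t..(t + e), ε * v u| := by
    refine intervalIntegral.norm_integral_le_abs_of_norm_le ?_ (hvi'.const_mul ε)
    refine (ae_restrict_iff' measurableSet_uIoc).2 (Eventually.of_forall fun u hu => ?_)
    have := (hball (hsub (uIoc_subset_uIcc hu))).2
    rw [mem_preimage, Metric.mem_closedBall, Real.dist_eq] at this
    rw [← sub_mul, norm_mul, Real.norm_eq_abs, Real.norm_of_nonneg (hv0 u)]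
    exact mul_le_mul_of_nonneg_right this (hv0 u)
  rw [intervalIntegral.integral_sub hkvi' (hvi'.const_mul _), intervalIntegral.integral_const_mul,
    intervalIntegral.integral_const_mul, Real.norm_eq_abs, abs_mul, abs_of_pos hε] at hdiff
  rw [← mul_div_assoc, ← sub_div, abs_div, div_le_iff₀ (abs_pos.2 hne)]
  refine hdiff.trans_eq ?_
  rw [mul_assoc]
  congr 1
  rcases lt_or_gt_of_ne (show e ≠ 0 from hne) with h | h
  · have : ∫ u in t..(t + e), v u ≤ 0 := by
      rw [intervalIntegral.integral_symm, neg_nonpos]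
      exact intervalIntegral.integral_nonneg (by linarith) fun u _ => hv0 u
    rw [abs_of_nonpos this, abs_of_neg h, mul_neg, div_mul_cancel₀ _ h.ne]
  · have : 0 ≤ ∫ u in t..(t + e), v u :=
      intervalIntegral.integral_nonneg (by linarith) fun u _ => hv0 u
    rw [abs_of_nonneg this, abs_of_pos h]
    field_simp

theorem IsLengthMetric.continuousOn_of_ACOn_confMetric {X : Type*} [MetricSpace X]
    (hlen : IsLengthMetric X) {g : X → ℝ} (hg : Continuous g) (hg0 : ∀ x, 0 < g x) {β : ℝ → X}
    {a b : ℝ} (hβ : ACOn (confMetric g) β a b) : ContinuousOn β (Icc a b) := by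
  obtain ⟨G, hG, hle⟩ := hβ
  intro t ht
  obtain ⟨r, hr, hlow⟩ := hlen.exists_mul_min_le_confMetric hg hg0 (β t) (m := g (β t) / 2)
    (half_pos (hg0 _)).le (half_lt_self (hg0 _))
  refine Metric.tendsto_nhds.2 fun ε hε => ?_
  have hpos : 0 < g (β t) / 2 * min r ε := mul_pos (half_pos (hg0 _)) (lt_min hr hε)
  filter_upwards [self_mem_nhdsWithin,
    (tendsto_integral_nhdsWithin hG ht).eventually (gt_mem_nhds hpos)] with u hu hlt
  have hmin : g (β t) / 2 * min r (dist (β u) (β t)) ≤ |∫ r in t..u, G r| := by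
    rcases le_total t u with h | h
    · exact ((hlow _).1.trans (hle ht hu h)).trans (le_abs_self _)
    · rw [intervalIntegral.integral_symm, abs_neg]
      exact ((hlow _).2.trans (hle hu ht h)).trans (le_abs_self _)
  have hlt' := lt_of_mul_lt_mul_left (hmin.trans_lt hlt) (half_pos (hg0 _)).le
  by_contra! hcon
  exact absurd hlt' (not_lt.2 (min_le_min_left r hcon))

theorem IsLengthMetric.integrableOn_mSpeed_of_ACOn_confMetric {X : Type*} [MetricSpace X]
    (hlen : IsLengthMetric X) {g : X → ℝ} (hg : Continuous g) (hg0 : ∀ x, 0 < g x) {β : ℝ → X}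
    {a b : ℝ} (hab : a ≤ b) (hβ : ACOn (confMetric g) β a b) :
    IntegrableOn (mSpeed (fun x y : X => dist x y) β) (Ioo a b) ∧
      ∀ᵐ t : ℝ, t ∈ Ioo a b → IsBoundedUnder (· ≤ ·) (𝓝[≠] (0 : ℝ))
        (fun e => dist (β (t + e)) (β t) / |e|) := by
  have hcont := hlen.continuousOn_of_ACOn_confMetric hg hg0 hβ
  obtain ⟨G, hG, hle⟩ := hβ
  obtain ⟨t₀, -, hmin⟩ := isCompact_Icc.exists_isMinOn (nonempty_Icc.2 hab)
    (hg.comp_continuousOn hcont)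
  have hm : 0 < g (β t₀) / 2 := half_pos (hg0 _)
  refine integrableOn_mSpeed_of_eventually_le (c := (g (β t₀) / 2)⁻¹) hab hcont hG fun t ht => ?_
  have hmt : g (β t₀) ≤ g (β t) := hmin (Ioo_subset_Icc_self ht)
  obtain ⟨r, hr, hlow⟩ := hlen.exists_mul_min_le_confMetric hg hg0 (β t) (m := g (β t₀) / 2)
    hm.le (by linarith)
  filter_upwards [Ioo_mem_nhds ht.1 ht.2, (hcont.continuousAt (Icc_mem_nhds ht.1 ht.2)).eventually
    (Metric.ball_mem_nhds _ hr)] with u hu hur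
  have hlow' := hlow (β u)
  rw [min_eq_right (Metric.mem_ball.1 hur).le] at hlow'
  rw [inv_mul_eq_div, inv_mul_eq_div, le_div_iff₀' hm, le_div_iff₀' hm]
  exact ⟨fun h => hlow'.1.trans (hle (Ioo_subset_Icc_self ht) (Ioo_subset_Icc_self hu) h),
    fun h => hlow'.2.trans (hle (Ioo_subset_Icc_self hu) (Ioo_subset_Icc_self ht) h)⟩

theorem IsLengthMetric.ae_genSpeed_eq {X : Type*} [MetricSpace X]
    (hlen : IsLengthMetric X) {I : Set ℝ} (hI : I.Nonempty) {ρ : ℝ → X → ℝ}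
    (hρ : ∀ s ∈ I, Continuous (ρ s)) (hρ0 : ∀ s ∈ I, ∀ x, 0 < ρ s x) {β : ℝ → X}
    {a b : ℝ} (hab : a < b) (hβ : ∀ s ∈ I, ACOn (confMetric (ρ s)) β a b) :
    ContinuousOn β (Icc a b) ∧ IntegrableOn (mSpeed (fun x y : X => dist x y) β) (Ioo a b) ∧
      ∀ᵐ t : ℝ, t ∈ Ioo a b → ∀ s ∈ I, genSpeed (fun s => confMetric (ρ s)) β s t =
        ρ s (β t) * mSpeed (fun x y : X => dist x y) β t := by
  obtain ⟨s₀, hs₀⟩ := hI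
  have hcont := hlen.continuousOn_of_ACOn_confMetric (hρ _ hs₀) (hρ0 _ hs₀) (hβ _ hs₀)
  obtain ⟨hint, hbdd⟩ :=
    hlen.integrableOn_mSpeed_of_ACOn_confMetric (hρ _ hs₀) (hρ0 _ hs₀) hab.le (hβ _ hs₀)
  refine ⟨hcont, hint, ?_⟩
  filter_upwards [ae_tendsto_average hab.le ((integrableOn_Icc_iff_integrableOn_Ioo).2 hint)]
    with t hlim ht s hs
  have hformula : ∀ᵐ u : ℝ, u ∈ Ioo a b → mSpeed (confMetric (ρ s)) β u =
      ρ s (β u) * mSpeed (fun x y : X => dist x y) β u := by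
    filter_upwards [hbdd] with u hu hmem
    exact hlen.mSpeed_confMetric (hρ _ hs) (hρ0 _ hs)
      (hcont.continuousAt (Icc_mem_nhds hmem.1 hmem.2)) (hu hmem)
  have hmain := tendsto_average_mul ht ((hρ _ hs).comp_continuousOn hcont) hint
    (fun u => mSpeed_nonneg (fun _ _ => dist_nonneg) β u) (hlim ht)
  unfold genSpeed
  refine (hmain.congr' ?_).limsup_eq
  filter_upwards [(tendsto_add_nhds t).eventually (Ioo_mem_nhds ht.1 ht.2)] with e he
  congr 1
  refine intervalIntegral.integral_congr_ae ?_
  filter_upwards [hformula] with u hu hmem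
  exact (hu (Set.ordConnected_Ioo.uIcc_subset ht he (uIoc_subset_uIcc hmem))).symm

theorem integral_nonneg_of_nonneg_of_nonpos {w : ℝ → ℝ} {a b c t : ℝ}
    (hw : IntervalIntegrable w volume a b) (h0 : ∫ u in a..b, w u = 0)
    (hl : ∀ u < c, 0 ≤ w u) (hr : ∀ u, c ≤ u → w u ≤ 0) (ht : t ∈ Icc a b) :
    0 ≤ ∫ u in a..t, w u := by
  have hab := ht.1.trans ht.2
  have h1 : IntervalIntegrable w volume a t :=
    hw.mono_set (by rw [uIcc_of_le hab, uIcc_of_le ht.1]; exact Icc_subset_Icc le_rfl ht.2)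
  have h2 : IntervalIntegrable w volume t b :=
    hw.mono_set (by rw [uIcc_of_le hab, uIcc_of_le ht.2]; exact Icc_subset_Icc ht.1 le_rfl)
  rcases le_total t c with htc | htc
  · rw [intervalIntegral.integral_of_le ht.1, integral_Ioc_eq_integral_Ioo]
    exact setIntegral_nonneg measurableSet_Ioo fun u hu => hl u (hu.2.trans_le htc)
  · have hadd := intervalIntegral.integral_add_adjacent_intervals h1 h2
    have : ∫ u in t..b, w u ≤ 0 := by
      rw [intervalIntegral.integral_of_le ht.2]
      exact setIntegral_nonpos measurableSet_Ioc fun u hu => hr u (htc.trans hu.1.le)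
    linarith

theorem exists_separated_subsets {A B : Set ℝ} (hA : MeasurableSet A) (hB : MeasurableSet B)
    (hAB : Disjoint A B) (hA0 : 0 < volume A) (hB0 : 0 < volume B) :
    ∃ A' ⊆ A, ∃ B' ⊆ B, MeasurableSet A' ∧ MeasurableSet B' ∧ 0 < volume A' ∧ 0 < volume B' ∧
      ∃ c, (A' ⊆ Iio c ∧ B' ⊆ Ici c) ∨ (B' ⊆ Iio c ∧ A' ⊆ Ici c) := by
  obtain ⟨x, hx, hxA⟩ := exists_mem_forall_mem_nhdsWithin_pos_measure hA0.ne'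
  obtain ⟨y, hy, hyB⟩ := exists_mem_forall_mem_nhdsWithin_pos_measure hB0.ne'
  have hne : x ≠ y := fun h => hAB.ne_of_mem hx hy h
  rcases lt_or_gt_of_ne hne with h | h
  · refine ⟨A ∩ Iio ((x + y) / 2), inter_subset_left, B ∩ Ici ((x + y) / 2), inter_subset_left,
      hA.inter measurableSet_Iio, hB.inter measurableSet_Ici,
      hxA _ (inter_mem_nhdsWithin _ (Iio_mem_nhds (by linarith))),
      hyB _ (inter_mem_nhdsWithin _ (Ici_mem_nhds (by linarith))),
      _, .inl ⟨inter_subset_right, inter_subset_right⟩⟩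
  · refine ⟨A ∩ Ici ((x + y) / 2), inter_subset_left, B ∩ Iio ((x + y) / 2), inter_subset_left,
      hA.inter measurableSet_Ici, hB.inter measurableSet_Iio,
      hxA _ (inter_mem_nhdsWithin _ (Ici_mem_nhds (by linarith))),
      hyB _ (inter_mem_nhdsWithin _ (Iio_mem_nhds (by linarith))),
      _, .inr ⟨inter_subset_right, inter_subset_right⟩⟩

theorem exists_bump {A B : Set ℝ} {a b : ℝ} (hab : a ≤ b) (hA : MeasurableSet A)
    (hB : MeasurableSet B) (hAB : Disjoint A B) (hAs : A ⊆ Ioo a b) (hBs : B ⊆ Ioo a b)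
    (hA0 : 0 < volume A) (hB0 : 0 < volume B) :
    ∃ (σ : ℝ) (ψ w : ℝ → ℝ) (W c₀ : ℝ) (A' : Set ℝ), |σ| = 1 ∧ 0 < c₀ ∧ A' ⊆ A ∧
      MeasurableSet A' ∧ 0 < volume A' ∧ ψ a = 0 ∧ ψ b = 0 ∧ (∀ t ∈ Icc a b, 0 ≤ σ * ψ t) ∧
      (∀ t u, |ψ t - ψ u| ≤ W * |t - u|) ∧ (∀ᵐ t : ℝ, t ∈ Ioo a b → HasDerivAt ψ (w t) t) ∧
      (∀ t, |w t| ≤ W) ∧ (∀ t ∉ B, 0 ≤ w t) ∧ ∀ t ∈ A', c₀ ≤ w t := by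
  obtain ⟨A', hA', B', hB', hAm, hBm, hA0', hB0', c, hc⟩ :=
    exists_separated_subsets hA hB hAB hA0 hB0
  have hAB' : Disjoint A' B' := hAB.mono hA' hB'
  have hAfin : volume A' ≠ ∞ := measure_ne_top_of_subset (hA'.trans hAs) (by simp)
  have hBfin : volume B' ≠ ∞ := measure_ne_top_of_subset (hB'.trans hBs) (by simp)
  set p := volume.real A' with hp
  set q := volume.real B' with hq
  have hp0 : 0 < p := ENNReal.toReal_pos hA0'.ne' hAfin
  have hq0 : 0 < q := ENNReal.toReal_pos hB0'.ne' hBfin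
  set w : ℝ → ℝ := fun t => A'.indicator (fun _ => q) t - B'.indicator (fun _ => p) t with hw
  have hwA : ∀ t ∈ A', w t = q := fun t ht => by
    simp [hw, ht, hAB'.notMem_of_mem_left ht]
  have hwB : ∀ t ∈ B', w t = -p := fun t ht => by
    simp [hw, ht, hAB'.notMem_of_mem_right ht]
  have hw0 : ∀ t, t ∉ A' → t ∉ B' → w t = 0 := fun t h1 h2 => by simp [hw, h1, h2]
  have hW : ∀ t, |w t| ≤ p + q := fun t => by
    by_cases h1 : t ∈ A'
    · rw [hwA t h1, abs_of_pos hq0]; linarith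
    · by_cases h2 : t ∈ B'
      · rw [hwB t h2, abs_neg, abs_of_pos hp0]; linarith
      · rw [hw0 t h1 h2, abs_zero]; positivity
  have hi1 : Integrable (A'.indicator fun _ => q) :=
    (integrable_indicator_iff hAm).2 (integrableOn_const hAfin)
  have hi2 : Integrable (B'.indicator fun _ => p) :=
    (integrable_indicator_iff hBm).2 (integrableOn_const hBfin)
  have hint : Integrable w := hi1.sub hi2
  have hzero : ∫ t in a..b, w t = 0 := by
    rw [intervalIntegral.integral_sub hi1.intervalIntegrable hi2.intervalIntegrable,
      intervalIntegral.integral_of_le hab, intervalIntegral.integral_of_le hab,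
      setIntegral_indicator hAm, setIntegral_indicator hBm,
      inter_eq_right.2 (hA'.trans (hAs.trans Ioo_subset_Ioc_self)),
      inter_eq_right.2 (hB'.trans (hBs.trans Ioo_subset_Ioc_self)), setIntegral_const,
      setIntegral_const, smul_eq_mul, smul_eq_mul, ← hp, ← hq, mul_comm, sub_self]
  have hnn : ∀ t, t ∉ B' → 0 ≤ w t := fun t ht => by
    by_cases h1 : t ∈ A'
    · rw [hwA t h1]; exact hq0.le
    · rw [hw0 t h1 ht]
  have hnp : ∀ t, t ∉ A' → w t ≤ 0 := fun t ht => by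
    by_cases h1 : t ∈ B'
    · rw [hwB t h1]; linarith
    · rw [hw0 t ht h1]
  have hσ : ∃ σ : ℝ, |σ| = 1 ∧ ∀ t ∈ Icc a b, 0 ≤ σ * ∫ u in a..t, w u := by
    rcases hc with ⟨h1, h2⟩ | ⟨h1, h2⟩
    · refine ⟨1, abs_one, fun t ht => ?_⟩
      rw [one_mul]
      exact integral_nonneg_of_nonneg_of_nonpos hint.intervalIntegrable hzero
        (fun u hu => hnn u fun h => (h2 h).not_gt hu)
        (fun u hu => hnp u fun h => (h1 h).not_ge hu) ht
    · refine ⟨-1, by simp, fun t ht => ?_⟩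
      rw [neg_one_mul, ← intervalIntegral.integral_neg]
      exact integral_nonneg_of_nonneg_of_nonpos hint.neg.intervalIntegrable
        (by rw [intervalIntegral.integral_neg, hzero, neg_zero])
        (fun u hu => neg_nonneg.2 (hnp u fun h => (h2 h).not_gt hu))
        (fun u hu => neg_nonpos.2 (hnn u fun h => (h1 h).not_ge hu)) ht
  obtain ⟨σ, hσ1, hσ⟩ := hσ
  refine ⟨σ, fun t => ∫ u in a..t, w u, w, p + q, q, A', hσ1, hq0, hA', hAm, hA0',
    intervalIntegral.integral_same, hzero, hσ, fun t u => ?_, ?_, hW,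
    fun t ht => hnn t fun h => ht (hB' h), fun t ht => (hwA t ht).ge⟩
  · rw [intervalIntegral.integral_interval_sub_left hint.intervalIntegrable
      hint.intervalIntegrable, ← Real.norm_eq_abs]
    exact intervalIntegral.norm_integral_le_of_norm_le_const fun x _ => hW x
  · filter_upwards [(hint.intervalIntegrable (a := a) (b := b)).ae_hasDerivAt_integral] with t ht hm
    exact ht (by rw [uIcc_of_le hab]; exact Ioo_subset_Icc_self hm) a left_mem_uIcc

theorem AbsolutelyContinuousOnInterval.acOn {f : ℝ → ℝ} {a b : ℝ} (hab : a ≤ b)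
    (hf : AbsolutelyContinuousOnInterval f a b) : ACOn rdist f a b := by
  refine ⟨fun t => |deriv f t|, ((intervalIntegrable_iff_integrableOn_Icc_of_le hab).1
    hf.intervalIntegrable_deriv).abs, fun t u ht hu htu => ?_⟩
  have hsub : uIcc t u ⊆ uIcc a b := by
    rw [uIcc_of_le hab, uIcc_of_le htu]; exact Icc_subset_Icc ht.1 hu.2
  rw [rdist, abs_sub_comm, ← (hf.mono hsub).integral_deriv_eq_sub]
  exact intervalIntegral.abs_integral_le_integral_abs htu

theorem abs_exp_sub_exp_le {x y r : ℝ} (hx : x ≤ r) (hy : y ≤ r) :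
    |Real.exp x - Real.exp y| ≤ Real.exp r * |x - y| := by
  have key : ∀ {x y : ℝ}, x ≤ r → Real.exp x - Real.exp y ≤ Real.exp r * |x - y| := by
    intro x y hx
    have h1 : Real.exp x - Real.exp y ≤ Real.exp x * (x - y) := by
      have h2 := Real.add_one_le_exp (y - x)
      have h3 : Real.exp y = Real.exp x * Real.exp (y - x) := by
        rw [← Real.exp_add]; ring_nf
      rw [h3]
      nlinarith [Real.exp_pos x]
    exact h1.trans ((mul_le_mul_of_nonneg_left (le_abs_self _) (Real.exp_pos x).le).trans
      (mul_le_mul_of_nonneg_right (Real.exp_le_exp.2 hx) (abs_nonneg _)))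
  rw [abs_le]
  exact ⟨by have := key (x := y) (y := x) hy; rw [abs_sub_comm] at this; linarith, key hx⟩

theorem ACOn.exp_const_mul {α : ℝ → ℝ} {a b c r : ℝ} (hα : ACOn rdist α a b)
    (hr : ∀ t ∈ Icc a b, c * α t ≤ r) : ACOn rdist (fun t => Real.exp (c * α t)) a b := by
  obtain ⟨g, hg, hle⟩ := hα
  refine ⟨fun t => Real.exp r * |c| * g t, hg.const_mul _, fun t u ht hu htu => ?_⟩
  rw [intervalIntegral.integral_const_mul]
  refine (abs_exp_sub_exp_le (hr t ht) (hr u hu)).trans ?_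
  rw [← mul_sub, abs_mul, ← mul_assoc]
  exact mul_le_mul_of_nonneg_left (hle ht hu htu) (by positivity)

theorem sq_sub_sq_le_of_perturbation {H R H' R' C m x p y v δ : ℝ} (hm : 0 < m) (hH : m ≤ H)
    (hR : m ≤ R) (hH' : |H' - H| ≤ C * x) (hR' : |R' - R| ≤ C * x) (hRpos : 0 ≤ R')
    (hx : 4 * (C * x) ≤ m) (hCx : 0 ≤ C * x) (hp : 0 < p) (hv : 0 ≤ v) (hδ : δ ≤ H * y)
    (hδ' : 2 * δ ≤ H * y) (hpos : 0 < H * p + δ) (hle : R * v ≤ H * p + δ) :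
    0 < p * (1 + 4 * C / m * x) + y ∧ (H * p + δ) ^ 2 - (R * v) ^ 2 ≤
      H' ^ 2 * (p * (1 + 4 * C / m * x) + y) ^ 2 - (R' * v) ^ 2 := by
  set z := C * x / m with hz
  have hz0 : 0 ≤ z := div_nonneg hCx hm.le
  have hz1 : z ≤ 1 / 4 := by rw [hz, div_le_iff₀ hm]; linarith
  have hCz : C * x = m * z := by rw [hz]; field_simp
  have hK : 4 * C / m * x = 4 * z := by rw [hz]; ring
  rw [hK]
  set p' := p * (1 + 4 * z) + y with hp'
  have hH0 : 0 < H := hm.trans_le hH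
  have hmH : m * z ≤ H * z := mul_le_mul_of_nonneg_right hH hz0
  have hmR : m * z ≤ R * z := mul_le_mul_of_nonneg_right hR hz0
  have hH1 : H * (1 - z) ≤ H' := by linarith [(abs_le.1 hH').1]
  have hR1 : R' ≤ R * (1 + z) := by linarith [(abs_le.1 hR').2]
  have hdelta : (1 + z) * δ ≤ (1 - z) * (H * y) := by
    rcases le_total 0 (H * y) with h | h
    · nlinarith
    · nlinarith
  have hmain : (1 + z) * (H * p + δ) ≤ H * (1 - z) * p' := by
    have : 0 ≤ H * p * (2 * z - 4 * z ^ 2) := by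
      refine mul_nonneg (mul_nonneg hH0.le hp.le) ?_
      nlinarith
    rw [hp']
    nlinarith
  have hHz : 0 < H * (1 - z) := mul_pos hH0 (by linarith)
  have hp'0 : 0 < p' := by
    have : 0 < H * (1 - z) * p' := (mul_pos (by linarith) hpos).trans_le hmain
    exact (mul_pos_iff_of_pos_left hHz).1 this
  refine ⟨hp'0, ?_⟩
  have h1 : (1 + z) * (H * p + δ) ≤ H' * p' :=
    hmain.trans (mul_le_mul_of_nonneg_right hH1 hp'0.le)
  have h2 : R' * v ≤ (1 + z) * (R * v) := by
    have := mul_le_mul_of_nonneg_right hR1 hv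
    linarith
  have h1' : ((1 + z) * (H * p + δ)) ^ 2 ≤ (H' * p') ^ 2 :=
    pow_le_pow_left₀ (by positivity) h1 2
  have h2' : (R' * v) ^ 2 ≤ ((1 + z) * (R * v)) ^ 2 :=
    pow_le_pow_left₀ (mul_nonneg hRpos hv) h2 2
  have hRv : 0 ≤ R * v := mul_nonneg (hm.le.trans hR) hv
  have h3 : 0 ≤ (H * p + δ) ^ 2 - (R * v) ^ 2 := sub_nonneg.2 (pow_le_pow_left₀ hRv hle 2)
  have h4 : 1 ≤ (1 + z) ^ 2 := one_le_pow₀ (by linarith)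
  nlinarith [mul_le_mul_of_nonneg_right h4 h3]

theorem sqrt_sub_le_sqrt_sub {y z κ : ℝ} (hκ : 0 < κ) (hy : κ ^ 2 ≤ y) (hz : 0 ≤ z)
    (hz' : z ≤ κ ^ 2) : √y - z / κ ≤ √(y - z) := by
  have hs : κ ≤ √y := Real.le_sqrt_of_sq_le hy
  have hs2 : √y ^ 2 = y := Real.sq_sqrt ((sq_nonneg κ).trans hy)
  refine Real.le_sqrt_of_sq_le ?_
  have h1 : z / κ ≤ κ := by rw [div_le_iff₀ hκ]; linarith [sq κ]
  have h2 : z = z / κ * κ := by field_simp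
  have h0 : 0 ≤ z / κ := by positivity
  nlinarith [mul_nonneg h0 (sub_nonneg.2 hs), mul_nonneg h0 (sub_nonneg.2 h1)]

theorem sqrt_sub_le_sqrt_sub_sq {P Q D κ B : ℝ} (hκ : 0 < κ) (hQ : 0 ≤ Q) (hQP : Q + κ ≤ P)
    (hPB : P ≤ B) (hD : 0 ≤ D) (hDκ : 2 * B * D ≤ κ ^ 2) :
    √(P ^ 2 - Q ^ 2) - 2 * B * D / κ ≤ √((P - D) ^ 2 - Q ^ 2) := by
  refine (sqrt_sub_le_sqrt_sub hκ (y := P ^ 2 - Q ^ 2) (z := 2 * B * D) ?_ ?_ hDκ).trans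
    (Real.sqrt_le_sqrt ?_)
  · nlinarith
  · exact mul_nonneg (by linarith) hD
  · nlinarith [mul_le_mul_of_nonneg_right hPB hD]

theorem contradiction_of_forall_sqrt_gain {f : ℝ → ℝ} {A : Set ℝ} {a b ε₀ c C l : ℝ}
    (hab : a ≤ b) (hf : IntervalIntegrable f volume a b) (hl : l = ∫ t in a..b, f t)
    (hA : MeasurableSet A) (hAs : A ⊆ Ioo a b) (hA0 : 0 < volume A) (hc : 0 < c) (hε₀ : 0 < ε₀)
    (h : ∀ ε ∈ Ioo 0 ε₀, ∃ F : ℝ → ℝ, IntervalIntegrable F volume a b ∧ ∫ t in a..b, F t ≤ l ∧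
      ∀ᵐ t : ℝ, t ∈ Ioo a b → f t + A.indicator (fun _ => c * √ε) t - C * ε ≤ F t) : False := by
  have hAfin : volume A ≠ ∞ := measure_ne_top_of_subset hAs (by simp)
  have hp0 : 0 < volume.real A := ENNReal.toReal_pos hA0.ne' hAfin
  have key : ∀ ε ∈ Ioo 0 ε₀, volume.real A * c ≤ √ε * (C * (b - a)) := by
    intro ε hε
    obtain ⟨F, hF, hFl, hle⟩ := h ε hε
    have hi : Integrable (A.indicator fun _ => c * √ε) :=
      (integrable_indicator_iff hA).2 (integrableOn_const hAfin)
    have hmono := intervalIntegral.integral_mono_ae_restrict hab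
      ((hf.add hi.intervalIntegrable).sub (intervalIntegrable_const (c := C * ε))) hF (by
        rw [← Measure.restrict_congr_set Ioo_ae_eq_Icc]
        exact (ae_restrict_iff' measurableSet_Ioo).2 hle)
    rw [intervalIntegral.integral_sub (hf.add hi.intervalIntegrable) intervalIntegrable_const,
      intervalIntegral.integral_add hf hi.intervalIntegrable, intervalIntegral.integral_const,
      intervalIntegral.integral_of_le hab (f := A.indicator _), setIntegral_indicator hA,
      inter_eq_right.2 (hAs.trans Ioo_subset_Ioc_self), setIntegral_const, smul_eq_mul,
      smul_eq_mul, ← hl] at hmono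
    have hs : 0 < √ε := Real.sqrt_pos.2 hε.1
    have hs2 : √ε * √ε = ε := Real.mul_self_sqrt hε.1.le
    have : √ε * (volume.real A * c) ≤ √ε * (√ε * (C * (b - a))) := by
      rw [← mul_assoc, ← mul_assoc, hs2] at *
      linarith
    exact le_of_mul_le_mul_left this hs
  have hlim : Tendsto (fun ε : ℝ => √ε * (C * (b - a))) (𝓝[>] 0) (𝓝 0) := by
    have hcont : Continuous fun ε : ℝ => √ε * (C * (b - a)) := by fun_prop
    have := hcont.tendsto 0
    rw [Real.sqrt_zero, zero_mul] at this
    exact this.mono_left nhdsWithin_le_nhds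
  have := ge_of_tendsto hlim (eventually_of_mem (Ioo_mem_nhdsGT hε₀) key)
  exact (mul_pos hp0 hc).not_ge this

theorem eventually_const_mul_lt (k : ℝ) {q : ℝ} (hq : 0 < q) : ∀ᶠ ε in 𝓝[>] (0 : ℝ), k * ε < q := by
  have hcont : Continuous fun ε : ℝ => k * ε := by fun_prop
  have h := hcont.tendsto 0
  rw [mul_zero] at h
  exact (h.mono_left nhdsWithin_le_nhds).eventually (gt_mem_nhds hq)

theorem two_mul_mul_le_sq_sub_sq {P P₀ δ : ℝ} (hP : P₀ ≤ P) (hδ : 0 ≤ δ) :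
    2 * P₀ * δ ≤ (P + δ) ^ 2 - P ^ 2 := by
  nlinarith [mul_le_mul_of_nonneg_right hP hδ, sq_nonneg δ]

set_option maxHeartbeats 800000 in
theorem exists_variation {X : Type*} [MetricSpace X] {I : Set ℝ} (hI : IsOpen I)
    {h ρ : ℝ → X → ℝ} (hpos : ∀ s ∈ I, ∀ x, 0 < h s x) (hρpos : ∀ s ∈ I, ∀ x, 0 < ρ s x)
    (hhlip : LocLipOn I h) (hρlip : LocLipOn I ρ) {α v : ℝ → ℝ} {β : ℝ → X} {a b : ℝ} (hab : a < b)
    (hα : ACOn rdist α a b) (hβ : ContinuousOn β (Icc a b)) (hαI : ∀ t ∈ Icc a b, α t ∈ I)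
    (hv : ∀ t, 0 ≤ v t) (hα' : ∀ᵐ t : ℝ, t ∈ Ioo a b → 0 < deriv α t)
    (hcaus : ∀ᵐ t : ℝ, t ∈ Ioo a b → ρ (α t) (β t) * v t ≤ h (α t) (β t) * deriv α t)
    {A B : Set ℝ} (hA : MeasurableSet A) (hB : MeasurableSet B) (hAs : A ⊆ Ioo a b)
    (hBs : B ⊆ Ioo a b) (hA0 : 0 < volume A) (hB0 : 0 < volume B) {P₀ P₁ κ : ℝ} (hP₀ : 0 < P₀)
    (hP₁ : 0 ≤ P₁) (hκ : 0 < κ)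
    (hAP : ∀ t ∈ A, ρ (α t) (β t) * v t = h (α t) (β t) * deriv α t ∧
      P₀ ≤ h (α t) (β t) * deriv α t)
    (hBP : ∀ t ∈ B, ρ (α t) (β t) * v t + κ ≤ h (α t) (β t) * deriv α t ∧
      h (α t) (β t) * deriv α t ≤ P₁) :
    ∃ A' ⊆ Ioo a b, MeasurableSet A' ∧ 0 < volume A' ∧ ∃ ε₀ > 0, ∃ c > 0, ∃ C : ℝ,
      ∀ ε ∈ Ioo 0 ε₀, ∃ α₁ : ℝ → ℝ, ACOn rdist α₁ a b ∧ α₁ a = α a ∧ α₁ b = α b ∧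
        (∀ t ∈ Icc a b, α₁ t ∈ I) ∧ ∀ᵐ t : ℝ, t ∈ Ioo a b → 0 < deriv α₁ t ∧
          (ρ (α₁ t) (β t) * v t) ^ 2 ≤ h (α₁ t) (β t) ^ 2 * deriv α₁ t ^ 2 ∧
          √(h (α t) (β t) ^ 2 * deriv α t ^ 2 - (ρ (α t) (β t) * v t) ^ 2) +
              A'.indicator (fun _ => c * √ε) t - C * ε ≤
            √(h (α₁ t) (β t) ^ 2 * deriv α₁ t ^ 2 - (ρ (α₁ t) (β t) * v t) ^ 2) := by
  have hAC := hα.absolutelyContinuousOnInterval hab.le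
  have hαc : ContinuousOn α (Icc a b) := by
    have := hAC.continuousOn
    rwa [uIcc_of_le hab.le] at this
  have hne : (Icc a b).Nonempty := nonempty_Icc.2 hab.le
  have hαK : IsCompact (α '' Icc a b) := isCompact_Icc.image_of_continuousOn hαc
  obtain ⟨r, hr, hrI⟩ := hαK.exists_cthickening_subset_open hI
    (by rintro _ ⟨t, ht, rfl⟩; exact hαI t ht)
  obtain ⟨C₁, hC₁⟩ := hhlip _ _ hrI hαK.cthickening (isCompact_Icc.image_of_continuousOn hβ)
  obtain ⟨C₂, hC₂⟩ := hρlip _ _ hrI hαK.cthickening (isCompact_Icc.image_of_continuousOn hβ)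
  set C := max (max C₁ C₂) 0 with hC
  have hC0 : 0 ≤ C := le_max_right _ _
  have hhc := hhlip.continuousOn_comp isCompact_Icc hαc hβ hαI
  have hρc := hρlip.continuousOn_comp isCompact_Icc hαc hβ hαI
  obtain ⟨t₁, ht₁, hmin₁⟩ := isCompact_Icc.exists_isMinOn hne hhc
  obtain ⟨t₂, ht₂, hmin₂⟩ := isCompact_Icc.exists_isMinOn hne hρc
  obtain ⟨t₃, ht₃, hmax₃⟩ := isCompact_Icc.exists_isMaxOn hne hhc
  obtain ⟨R, hR⟩ := isCompact_Icc.exists_bound_of_continuousOn hαc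
  set m := min (h (α t₁) (β t₁)) (ρ (α t₂) (β t₂)) with hm
  have hm0 : 0 < m := lt_min (hpos _ (hαI _ ht₁) _) (hρpos _ (hαI _ ht₂) _)
  set M := h (α t₃) (β t₃)
  have hM0 : 0 < M := hpos _ (hαI _ ht₃) _
  have hmh : ∀ t ∈ Icc a b, m ≤ h (α t) (β t) := fun t ht => (min_le_left _ _).trans (hmin₁ ht)
  have hmρ : ∀ t ∈ Icc a b, m ≤ ρ (α t) (β t) := fun t ht => (min_le_right _ _).trans (hmin₂ ht)
  have hhM : ∀ t ∈ Icc a b, h (α t) (β t) ≤ M := fun t ht => hmax₃ ht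
  have hAB : Disjoint A B := Set.disjoint_left.2 fun t h1 h2 => by
    linarith [(hAP t h1).1, (hBP t h2).1]
  obtain ⟨σ, ψ, w, W, c₀, A', hσ, hc₀, hA'A, hA'm, hA'0, hψa, hψb, hσψ, hψlip, hψd, hwW, hw0, hwc⟩ :=
    exists_bump hab.le hA hB hAB hAs hBs hA0 hB0
  have hW0 : 0 ≤ W := (abs_nonneg _).trans (hwW 0)
  set K := 4 * C / m with hK
  have hK0 : 0 ≤ K := by positivity
  set E : ℝ → ℝ := fun t => Real.exp (σ * K * α t) with hE
  have hEabs : ∀ t ∈ Icc a b, |σ * K * α t| ≤ K * R := fun t ht => by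
    rw [abs_mul, abs_mul, hσ, one_mul, abs_of_nonneg hK0]
    exact mul_le_mul_of_nonneg_left (hR t ht) hK0
  set E₀ := Real.exp (-(K * R))
  set E₁ := Real.exp (K * R)
  have hE₀ : 0 < E₀ := Real.exp_pos _
  have hE₁ : 0 < E₁ := Real.exp_pos _
  have hE0 : ∀ t, 0 < E t := fun t => Real.exp_pos _
  have hEl : ∀ t ∈ Icc a b, E₀ ≤ E t := fun t ht => Real.exp_le_exp.2 (abs_le.1 (hEabs t ht)).1
  have hEu : ∀ t ∈ Icc a b, E t ≤ E₁ := fun t ht => Real.exp_le_exp.2 (abs_le.1 (hEabs t ht)).2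
  have hψabs : ∀ t ∈ Icc a b, |ψ t| = σ * ψ t := fun t ht => by
    rw [← abs_of_nonneg (hσψ t ht), abs_mul, hσ, one_mul]
  have hψW : ∀ t ∈ Icc a b, σ * ψ t ≤ W * (b - a) := fun t ht => by
    have h1 := hψlip t a
    rw [hψa, sub_zero, abs_of_nonneg (sub_nonneg.2 ht.1), hψabs t ht] at h1
    exact h1.trans (mul_le_mul_of_nonneg_left (by linarith [ht.2]) hW0)
  set S := E₁ * (W * (b - a)) with hS
  set D := M * (E₁ * W) with hD
  have hD0 : 0 ≤ D := by positivity
  obtain ⟨ε₀, hε₀, hsmall⟩ := mem_nhdsGT_iff_exists_Ioo_subset.1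
    ((eventually_const_mul_lt S hr).and ((eventually_const_mul_lt (4 * C * S) hm0).and
      ((eventually_const_mul_lt D hκ).and (eventually_const_mul_lt (2 * P₁ * D) (pow_pos hκ 2)))))
  refine ⟨A', hA'A.trans hAs, hA'm, hA'0, ε₀, hε₀, √(P₀ * (m * E₀ * c₀)),
    Real.sqrt_pos.2 (by positivity), 2 * P₁ * D / κ, fun ε hε => ?_⟩
  obtain ⟨hs1, hs2, hs3, hs4⟩ := hsmall hε
  have hε0 : 0 < ε := hε.1
  have hx0 : ∀ t ∈ Icc a b, 0 ≤ ε * (E t * (σ * ψ t)) := fun t ht =>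
    mul_nonneg hε0.le (mul_nonneg (hE0 t).le (hσψ t ht))
  have hxS : ∀ t ∈ Icc a b, ε * (E t * (σ * ψ t)) ≤ S * ε := fun t ht => by
    rw [mul_comm S]
    exact mul_le_mul_of_nonneg_left (mul_le_mul (hEu t ht) (hψW t ht) (hσψ t ht) hE₁.le) hε0.le
  have hdist : ∀ t ∈ Icc a b, |α t + ε * (E t * ψ t) - α t| = ε * (E t * (σ * ψ t)) := fun t ht => by
    rw [add_sub_cancel_left, abs_mul, abs_mul, abs_of_pos hε0, abs_of_pos (hE0 t), hψabs t ht]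
  have hmem : ∀ t ∈ Icc a b, α t + ε * (E t * ψ t) ∈ Metric.cthickening r (α '' Icc a b) :=
    fun t ht => Metric.mem_cthickening_of_dist_le _ _ _ _ (mem_image_of_mem α ht) (by
      rw [Real.dist_eq, hdist t ht]; exact (hxS t ht).trans hs1.le)
  have hmem' : ∀ t ∈ Icc a b, α t ∈ Metric.cthickening r (α '' Icc a b) :=
    fun t ht => Metric.self_subset_cthickening _ (mem_image_of_mem α ht)
  have hACψ : AbsolutelyContinuousOnInterval ψ a b := by
    refine LipschitzOnWith.absolutelyContinuousOnInterval (K := W.toNNReal)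
      (LipschitzOnWith.of_dist_le_mul fun t _ u _ => ?_)
    rw [Real.coe_toNNReal _ hW0, Real.dist_eq, Real.dist_eq]
    exact hψlip t u
  have hACE : AbsolutelyContinuousOnInterval E a b :=
    (hα.exp_const_mul fun t ht => (abs_le.1 (hEabs t ht)).2).absolutelyContinuousOnInterval hab.le
  refine ⟨fun t => α t + ε * (E t * ψ t), AbsolutelyContinuousOnInterval.acOn hab.le
    (hAC.add ((hACE.mul hACψ).const_mul ε)), by simp [hψa], by simp [hψb],
    fun t ht => hrI (hmem t ht), ?_⟩
  filter_upwards [hα', hcaus, hψd] with t h1 h2 h3 ht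
  have ht' := Ioo_subset_Icc_self ht
  replace h1 := h1 ht
  replace h2 := h2 ht
  replace h3 := h3 ht
  have hdα : HasDerivAt α (deriv α t) t :=
    (differentiableAt_of_deriv_ne_zero h1.ne').hasDerivAt
  have hderiv : deriv (fun t => α t + ε * (E t * ψ t)) t =
      deriv α t * (1 + 4 * C / m * (ε * (E t * (σ * ψ t)))) + ε * (E t * w t) := by
    have hd : HasDerivAt (fun t => α t + ε * (E t * ψ t)) _ t :=
      hdα.add (((hdα.const_mul (σ * K)).exp.mul h3).const_mul ε)
    rw [hd.deriv, ← hK]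
    simp only [hE]
    ring
  rw [hderiv]
  have hvary : ∀ δ, δ ≤ h (α t) (β t) * (ε * (E t * w t)) →
      2 * δ ≤ h (α t) (β t) * (ε * (E t * w t)) → 0 < h (α t) (β t) * deriv α t + δ →
      ρ (α t) (β t) * v t ≤ h (α t) (β t) * deriv α t + δ → _ := fun δ hδ hδ' hδ0 hδQ =>
    sq_sub_sq_le_of_perturbation hm0 (hmh t ht') (hmρ t ht') (H' := h (α t + ε * (E t * ψ t)) (β t))
      (R' := ρ (α t + ε * (E t * ψ t)) (β t)) (C := C) (x := ε * (E t * (σ * ψ t)))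
      (by
        have := hC₁ _ (hmem t ht') _ (hmem' t ht') _ (mem_image_of_mem β ht')
          _ (mem_image_of_mem β ht')
        rw [dist_self, add_zero, hdist t ht'] at this
        exact this.trans (mul_le_mul_of_nonneg_right
          ((le_max_left _ _).trans (le_max_left _ _)) (hx0 t ht')))
      (by
        have := hC₂ _ (hmem t ht') _ (hmem' t ht') _ (mem_image_of_mem β ht')
          _ (mem_image_of_mem β ht')
        rw [dist_self, add_zero, hdist t ht'] at this
        exact this.trans (mul_le_mul_of_nonneg_right
          ((le_max_right _ _).trans (le_max_left _ _)) (hx0 t ht')))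
      (hρpos _ (hrI (hmem t ht')) _).le
      (by nlinarith [mul_le_mul_of_nonneg_left (hxS t ht') hC0])
      (mul_nonneg hC0 (hx0 t ht')) h1 (hv t) hδ hδ' hδ0 hδQ
  have hH0 : 0 < h (α t) (β t) := hm0.trans_le (hmh t ht')
  have hP : 0 < h (α t) (β t) * deriv α t := mul_pos hH0 h1
  have hQ : 0 ≤ ρ (α t) (β t) * v t := mul_nonneg (hm0.le.trans (hmρ t ht')) (hv t)
  have hC'0 : 0 ≤ 2 * P₁ * D / κ := by positivity
  rw [← mul_pow (h (α t) (β t))]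
  by_cases htB : t ∈ B
  · obtain ⟨hB1, hB2⟩ := hBP t htB
    have hy : -(D * ε) ≤ h (α t) (β t) * (ε * (E t * w t)) := by
      have : |h (α t) (β t) * (ε * (E t * w t))| ≤ D * ε := by
        rw [abs_mul, abs_mul, abs_mul, abs_of_pos hH0, abs_of_pos hε0, abs_of_pos (hE0 t), hD,
          mul_assoc, mul_comm _ ε]
        exact mul_le_mul (hhM t ht') (mul_le_mul_of_nonneg_left
          (mul_le_mul (hEu t ht') (hwW t) (abs_nonneg _) hE₁.le) hε0.le)
          (mul_nonneg hε0.le (mul_nonneg (hE0 t).le (abs_nonneg _))) hM0.le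
      exact (abs_le.1 this).1
    have hDε : 0 ≤ D * ε := by positivity
    obtain ⟨hp, hle⟩ := hvary (-(D * ε)) hy (by linarith) (by linarith) (by linarith)
    have h0 : 0 ≤ (h (α t) (β t) * deriv α t + -(D * ε)) ^ 2 - (ρ (α t) (β t) * v t) ^ 2 :=
      sub_nonneg.2 (pow_le_pow_left₀ hQ (by linarith) 2)
    refine ⟨hp, by linarith, ?_⟩
    rw [indicator_of_notMem fun hA' => hAB.ne_of_mem (hA'A hA') htB rfl, add_zero]
    have := sqrt_sub_le_sqrt_sub_sq hκ hQ hB1 hB2 hDε (by linarith)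
    rw [sub_eq_add_neg (h (α t) (β t) * deriv α t)] at this
    refine le_trans (le_of_eq ?_) (this.trans (Real.sqrt_le_sqrt hle))
    ring
  · have hy : 0 ≤ h (α t) (β t) * (ε * (E t * w t)) :=
      mul_nonneg hH0.le (mul_nonneg hε0.le (mul_nonneg (hE0 t).le (hw0 t htB)))
    by_cases htA : t ∈ A'
    · obtain ⟨hA1, hA2⟩ := hAP t (hA'A htA)
      have hy' : m * (ε * (E₀ * c₀)) ≤ h (α t) (β t) * (ε * (E t * w t)) :=
        mul_le_mul (hmh t ht') (mul_le_mul_of_nonneg_left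
          (mul_le_mul (hEl t ht') (hwc t htA) hc₀.le (hE0 t).le) hε0.le) (by positivity) hH0.le
      have hδ0 : 0 < m * (ε * (E₀ * c₀)) / 2 := by positivity
      obtain ⟨hp, hle⟩ := hvary (m * (ε * (E₀ * c₀)) / 2) (by linarith) (by linarith)
        (by linarith) (by linarith)
      rw [hA1] at hle ⊢
      have h0 : P₀ * (m * E₀ * c₀) * ε ≤ (h (α t) (β t) * deriv α t + m * (ε * (E₀ * c₀)) / 2) ^ 2 -
          (h (α t) (β t) * deriv α t) ^ 2 := by
        refine le_trans (le_of_eq ?_) (two_mul_mul_le_sq_sub_sq hA2 hδ0.le)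
        ring
      have h00 : 0 ≤ P₀ * (m * E₀ * c₀) * ε := by positivity
      refine ⟨hp, by linarith, ?_⟩
      rw [indicator_of_mem htA, sub_self, Real.sqrt_zero, zero_add,
        ← Real.sqrt_mul (by positivity)]
      exact (sub_le_self _ (by positivity)).trans (Real.sqrt_le_sqrt (h0.trans hle))
    · obtain ⟨hp, hle⟩ := hvary 0 hy (by linarith) (by linarith) (by linarith)
      rw [add_zero] at hle
      have h0 : 0 ≤ (h (α t) (β t) * deriv α t) ^ 2 - (ρ (α t) (β t) * v t) ^ 2 :=
        sub_nonneg.2 (pow_le_pow_left₀ hQ h2 2)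
      refine ⟨hp, by linarith, ?_⟩
      rw [indicator_of_notMem htA, add_zero]
      exact (sub_le_self _ (by positivity)).trans (Real.sqrt_le_sqrt hle)

theorem exists_measurableSet_subset_of_not_ae {s : Set ℝ} (hs : MeasurableSet s) {q : ℕ → ℝ → Prop}
    (hq : ∀ n, NullMeasurableSet {t | q n t} (volume.restrict s))
    (h : ¬∀ᵐ t ∂volume.restrict s, ∀ n, ¬q n t) :
    ∃ n, ∃ A ⊆ s, MeasurableSet A ∧ 0 < volume A ∧ ∀ t ∈ A, q n t := by
  rw [ae_all_iff, not_forall] at h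
  obtain ⟨n, hn⟩ := h
  obtain ⟨A, hAq, hA, hAe⟩ := (hq n).exists_measurable_subset_ae_eq
  refine ⟨n, A ∩ s, inter_subset_right, hA.inter hs, ?_, fun t ht => hAq ht.1⟩
  rw [← Measure.restrict_apply hA, measure_congr hAe, pos_iff_ne_zero]
  intro h0
  exact hn (by rw [ae_iff]; simpa using h0)

theorem exists_tight_set {P Q : ℝ → ℝ} {a b : ℝ}
    (hP : AEMeasurable P (volume.restrict (Ioo a b)))
    (hQ : AEMeasurable Q (volume.restrict (Ioo a b)))
    (hP0 : ∀ᵐ t ∂volume.restrict (Ioo a b), 0 < P t)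
    (hQP : ∀ᵐ t ∂volume.restrict (Ioo a b), Q t ≤ P t)
    (h : ¬∀ᵐ t ∂volume.restrict (Ioo a b), Q t < P t) :
    ∃ P₀ > 0, ∃ A ⊆ Ioo a b, MeasurableSet A ∧ 0 < volume A ∧ ∀ t ∈ A, Q t = P t ∧ P₀ ≤ P t := by
  obtain ⟨n, hn⟩ := exists_measurableSet_subset_of_not_ae measurableSet_Ioo
    (q := fun n t => Q t = P t ∧ 1 / ((n : ℝ) + 1) ≤ P t)
    (fun n => (nullMeasurableSet_eq_fun hQ hP).inter (nullMeasurableSet_le aemeasurable_const hP))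
    (fun hn => h (by
      filter_upwards [hn, hP0, hQP] with t h1 h2 h3
      refine lt_of_le_of_ne h3 fun h4 => ?_
      obtain ⟨n, hn⟩ := exists_nat_one_div_lt h2
      exact h1 n ⟨h4, hn.le⟩))
  exact ⟨_, Nat.one_div_pos_of_nat, hn⟩

theorem exists_gap_set {P Q : ℝ → ℝ} {a b : ℝ}
    (hP : AEMeasurable P (volume.restrict (Ioo a b)))
    (hQ : AEMeasurable Q (volume.restrict (Ioo a b)))
    (h : ¬∀ᵐ t ∂volume.restrict (Ioo a b), P t ≤ Q t) :
    ∃ κ > 0, ∃ P₁ ≥ 0, ∃ B ⊆ Ioo a b, MeasurableSet B ∧ 0 < volume B ∧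
      ∀ t ∈ B, Q t + κ ≤ P t ∧ P t ≤ P₁ := by
  obtain ⟨n, hn⟩ := exists_measurableSet_subset_of_not_ae measurableSet_Ioo
    (q := fun n t => Q t + 1 / ((n : ℝ) + 1) ≤ P t ∧ P t ≤ n)
    (fun n => (nullMeasurableSet_le (hQ.add_const _) hP).inter
      (nullMeasurableSet_le hP aemeasurable_const))
    (fun hn => h (by
      filter_upwards [hn] with t h1
      by_contra! h2
      obtain ⟨n, hn⟩ := exists_nat_one_div_lt (sub_pos.2 h2)
      obtain ⟨k, hk⟩ := exists_nat_ge (P t)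
      refine h1 (max n k) ⟨?_, hk.trans (by exact_mod_cast le_max_right n k)⟩
      have := Nat.one_div_le_one_div (α := ℝ) (le_max_left n k)
      linarith))
  exact ⟨_, Nat.one_div_pos_of_nat, _, Nat.cast_nonneg n, hn⟩

theorem intervalIntegrable_sqrt_sq_sub_sq {P Q : ℝ → ℝ} {a b : ℝ}
    (hP : IntervalIntegrable P volume a b) (hQ : IntervalIntegrable Q volume a b) :
    IntervalIntegrable (fun t => √(P t ^ 2 - Q t ^ 2)) volume a b := by
  refine hP.norm.mono_fun ?_ (Eventually.of_forall fun t => ?_)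
  · have h1 := hP.def'.aestronglyMeasurable.aemeasurable
    have h2 := hQ.def'.aestronglyMeasurable.aemeasurable
    exact (((h1.pow_const 2).sub (h2.pow_const 2)).sqrt).aestronglyMeasurable
  · beta_reduce
    rw [norm_norm, Real.norm_of_nonneg (Real.sqrt_nonneg _), Real.norm_eq_abs]
    exact (Real.sqrt_le_sqrt (sub_le_self _ (sq_nonneg _))).trans_eq (Real.sqrt_sq_eq_abs _)

theorem CausalCurve.futureCausal_of_timeSep_pos {X : Type*} {I : Set ℝ} {d : ℝ → X → X → ℝ}
    {h : ℝ → X → ℝ} {α : ℝ → ℝ} {β : ℝ → X} {a b : ℝ} (hγ : CausalCurve I d h α β a b)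
    (hpos : 0 < timeSep I d h (α a, β a) (α b, β b)) : FutureCausal I d h α β a b := by
  obtain ⟨hcurve, hdir, hineq⟩ := hγ
  refine ⟨hcurve, hdir.resolve_right fun hpast => ?_, hineq⟩
  obtain ⟨-, ⟨a', b', α', β', ⟨hcurve', hfut, -⟩, ha, -, hb, -, -⟩, -⟩ := lt_sSup_iff.1 hpos
  have h1 := hcurve.2.1.lt_of_deriv_neg hcurve.1 hpast
  have h2 := hcurve'.2.1.lt_of_deriv_pos hcurve'.1 hfut
  rw [ha, hb] at h2
  exact h1.not_gt h2

/-- **Regularity in the conformal case** (Theorem 5.2): if `d` is a locally compact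
length metric, `h, ρ` are locally Lipschitz and `F = {d_{ρ(s,·)}}`, then any
maximizing causal curve of positive Lorentzian length is timelike. -/
theorem maximizing_causal_curve_is_timelike {X : Type*} [MetricSpace X]
    [LocallyCompactSpace X] (hlen : IsLengthMetric X)
    (I : Set ℝ) (hIopen : IsOpen I) (hIord : I.OrdConnected) (hIne : I.Nonempty)
    (h ρ : ℝ → X → ℝ)
    (hpos : ∀ s ∈ I, ∀ x : X, 0 < h s x) (hρpos : ∀ s ∈ I, ∀ x : X, 0 < ρ s x)
    (hhlip : LocLipOn I h) (hρlip : LocLipOn I ρ)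
    (a b : ℝ) (α : ℝ → ℝ) (β : ℝ → X)
    (hcaus : CausalCurve I (fun s => confMetric (ρ s)) h α β a b)
    (hpos' : 0 < lorLen (fun s => confMetric (ρ s)) h α β a b)
    (hmax : ENNReal.ofReal (lorLen (fun s => confMetric (ρ s)) h α β a b) =
      timeSep I (fun s => confMetric (ρ s)) h (α a, β a) (α b, β b)) :
    TimelikeIneq (fun s => confMetric (ρ s)) h α β a b := by
  have hfc := hcaus.futureCausal_of_timeSep_pos (hmax ▸ ENNReal.ofReal_pos.2 hpos')
  obtain ⟨⟨hab, hα, hβAC, hαI⟩, hfut, hineq⟩ := hfc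
  obtain ⟨hβ, hvint, hspeed⟩ := hlen.ae_genSpeed_eq hIne (fun s hs => hρlip.continuous hs)
    hρpos hab hβAC
  set v := mSpeed (fun x y : X => dist x y) β with hv
  have hv0 : ∀ t, 0 ≤ v t := mSpeed_nonneg (fun _ _ => dist_nonneg) β
  have hvi : IntervalIntegrable v volume a b := (intervalIntegrable_iff_Ioo hab.le).2 hvint
  have hint : ∀ {f : ℝ → X → ℝ} {α₁ u : ℝ → ℝ}, LocLipOn I f → ACOn rdist α₁ a b →
      (∀ t ∈ Icc a b, α₁ t ∈ I) → IntervalIntegrable u volume a b →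
      IntervalIntegrable (fun t => f (α₁ t) (β t) * u t) volume a b :=
    fun hf hα₁ hα₁I hu => hu.continuousOn_mul (by
      rw [uIcc_of_le hab.le]
      refine hf.continuousOn_comp isCompact_Icc ?_ hβ hα₁I
      have := (hα₁.absolutelyContinuousOnInterval hab.le).continuousOn
      rwa [uIcc_of_le hab.le] at this)
  have hlength : ∀ α₁ : ℝ → ℝ, ACOn rdist α₁ a b → (∀ t ∈ Icc a b, α₁ t ∈ I) →
      IntervalIntegrable (fun t => √(h (α₁ t) (β t) ^ 2 * deriv α₁ t ^ 2 -
        (ρ (α₁ t) (β t) * v t) ^ 2)) volume a b ∧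
      lorLen (fun s => confMetric (ρ s)) h α₁ β a b = ∫ t in a..b,
        √(h (α₁ t) (β t) ^ 2 * deriv α₁ t ^ 2 - (ρ (α₁ t) (β t) * v t) ^ 2) := by
    intro α₁ hα₁ hα₁I
    constructor
    · simp_rw [← mul_pow (h _ _)]
      exact intervalIntegrable_sqrt_sq_sub_sq
        (hint hhlip hα₁ hα₁I (hα₁.sub_eq_integral_deriv hab.le).1) (hint hρlip hα₁ hα₁I hvi)
    · refine intervalIntegral.integral_congr_ae_restrict ?_
      rw [uIoc_of_le hab.le, ← Measure.restrict_congr_set Ioo_ae_eq_Ioc]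
      refine (ae_restrict_iff' measurableSet_Ioo).2 ?_
      filter_upwards [hspeed] with t ht hm
      rw [ht hm _ (hα₁I t (Ioo_subset_Icc_self hm))]
  have hP := ((intervalIntegrable_iff_Ioo hab.le).1 (hint hhlip hα hαI
    (hα.sub_eq_integral_deriv hab.le).1)).aestronglyMeasurable.aemeasurable
  have hQ := ((intervalIntegrable_iff_Ioo hab.le).1
    (hint hρlip hα hαI hvi)).aestronglyMeasurable.aemeasurable
  have hP0 : ∀ᵐ t : ℝ, t ∈ Ioo a b → 0 < h (α t) (β t) * deriv α t := by
    filter_upwards [hfut] with t ht hm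
    exact mul_pos (hpos _ (hαI t (Ioo_subset_Icc_self hm)) _) (ht hm)
  have hQP : ∀ᵐ t : ℝ, t ∈ Ioo a b →
      ρ (α t) (β t) * v t ≤ h (α t) (β t) * deriv α t := by
    filter_upwards [hP0, hspeed, hineq] with t h1 h2 h3 hm
    have h3 := h3 hm
    rw [h2 hm _ (hαI t (Ioo_subset_Icc_self hm)), ← mul_pow] at h3
    exact le_of_sq_le_sq h3 (h1 hm).le
  obtain ⟨hfint, hfeq⟩ := hlength α hα hαI
  by_contra hnot
  obtain ⟨P₀, hP₀, A, hAs, hA, hA0, hAP⟩ := exists_tight_set hP hQ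
    ((ae_restrict_iff' measurableSet_Ioo).2 hP0) ((ae_restrict_iff' measurableSet_Ioo).2 hQP)
    (fun hlt => hnot (by
      filter_upwards [(ae_restrict_iff' measurableSet_Ioo).1 hlt, hspeed] with t h1 h2 hm
      have ht := Ioo_subset_Icc_self hm
      rw [h2 hm _ (hαI t ht), ← mul_pow]
      exact pow_lt_pow_left₀ (h1 hm) (mul_nonneg (hρpos _ (hαI t ht) _).le (hv0 t)) two_ne_zero))
  obtain ⟨κ, hκ, P₁, hP₁, B, hBs, hB, hB0, hBP⟩ := exists_gap_set hP hQ
    (fun hle => by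
      refine hpos'.ne' (hfeq.trans (intervalIntegral.integral_zero_ae ?_))
      have hle' : ∀ᵐ t ∂volume.restrict (Ioc a b),
          h (α t) (β t) * deriv α t ≤ ρ (α t) (β t) * v t := by
        rwa [← Measure.restrict_congr_set Ioo_ae_eq_Ioc]
      have hP0' : ∀ᵐ t ∂volume.restrict (Ioc a b), 0 < h (α t) (β t) * deriv α t := by
        rw [← Measure.restrict_congr_set Ioo_ae_eq_Ioc]
        exact (ae_restrict_iff' measurableSet_Ioo).2 hP0
      rw [uIoc_of_le hab.le]
      filter_upwards [(ae_restrict_iff' measurableSet_Ioc).1 hle',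
        (ae_restrict_iff' measurableSet_Ioc).1 hP0'] with t h1 h2 hm
      rw [← mul_pow]
      exact Real.sqrt_eq_zero_of_nonpos
        (sub_nonpos.2 (pow_le_pow_left₀ (h2 hm).le (h1 hm) 2)))
  obtain ⟨A', hA's, hA', hA'0, ε₀, hε₀, c, hc, C, hvar⟩ := exists_variation hIopen hpos hρpos hhlip
    hρlip hab hα hβ hαI hv0 hfut hQP hA hB hAs hBs hA0 hB0 hP₀ hP₁ hκ hAP hBP
  refine contradiction_of_forall_sqrt_gain hab.le hfint hfeq hA' hA's hA'0 hc hε₀ (C := C)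
    fun ε hε => ?_
  obtain ⟨α₁, hα₁, ha, hb, hα₁I, hae⟩ := hvar ε hε
  obtain ⟨hFint, hFeq⟩ := hlength α₁ hα₁ hα₁I
  refine ⟨_, hFint, ?_, hae.mono fun t ht hm => (ht hm).2.2⟩
  rw [← hFeq, ← ENNReal.ofReal_le_ofReal_iff hpos'.le, hmax]
  refine le_sSup ⟨a, b, α₁, β, ⟨⟨hab, hα₁, hβAC, hα₁I⟩, hae.mono fun t ht hm => (ht hm).1, ?_⟩,
    ha, rfl, hb, rfl, rfl⟩
  filter_upwards [hae, hspeed] with t h1 h2 hm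
  rw [h2 hm _ (hα₁I t (Ioo_subset_Icc_self hm))]
  exact (h1 hm).2.1
end
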